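/- arXiv:1308.2808 — 3 statements merged into one kernel-verified Lean document; each statement's English description precedes it below -/
import Mathlib

section
/- Let g ∈ L¹(ℝ) be a totally positive function of finite type m ≥ 2, identified with its continuous representative, and suppose g is even, i.e. g(−x) = g(x) for all x ∈ ℝ. Let M ∈ ℕ be odd. Then Sg ∈ ℓ²(ℤ) and the Gabor family G(Sg, M, 1/M) (at the critical density α = M, β = 1/M) is a frame for ℓ²(ℤ): there exist A, B > 0 such that A‖f‖² ≤ Σ_{k∈ℤ} Σ_{l=0}^{M−1} |⟨f, M_{l/M}T_{kM}(Sg)⟩|² ≤ B‖f‖² for all f ∈ ℓ²(ℤ). -/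
/-!
At the critical density `a = M`, `β = 1/M` the Gabor coefficients of `f` are, up to a discrete Fourier
transform in the modulation index, the `M` convolutions of `f` and `g` along the cosets `r + Mℤ`.
Hence the family is a frame as soon as each symbol `∑ₙ g(nM + r) zⁿ`, `0 ≤ r < M`, has no zero on the
unit circle (`gabor_frame_of_symbols`). These symbols are values of the Zak transform of `g`.

By Fourier inversion `g` is an iterated convolution of one-sided exponentials (`eq_tpChain`), so it is
real and decays exponentially. Since `g` is even, the product formula forces its Fourier transform to
be real, and it is positive because it has no zeros.

* For `r = 0`, Poisson summation writes the symbol as a sum of values of the positive function `𝓕 g`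
  (`symbol_zero_ne`).
* For `0 < r < M`, reality and evenness of `g` show that a zero of the Zak transform at `r` yields a
  zero at `-r` on the same fibre `z`, and these are distinct modulo `M` because `M` is odd. Thus a real
  part of a multiple of the Zak transform has two zeros in each period. Convolution with an
  exponential inverts `1 + δ d/dx`, so by Rolle's theorem removing one factor costs at most one
  zero from the whole sequence. After removing all factors but two, there are still two zeros per
  period asymptotically, whereas the periodization of the remaining single exponential is `e^{-x/δ}`
  times a nonzero constant on each period, which permits only one
  (`zak_tpChain_not_two_zeros`).
-/

open MeasureTheory Complex FourierTransform

/-- The Gabor coefficient `⟨f, M_{l/M} T_{ka} g⟩` in `ℓ²(ℤ)`, where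
`(M_{l/M}T_{ka}g)(j) = g(j - ka) e^{2πi l j/M}`. -/
noncomputable def gaborCoefZ (g : ℤ → ℂ) (a M : ℕ) (f : ℤ → ℂ) (k : ℤ) (l : ℕ) : ℂ :=
  ∑' j : ℤ, f j * star (g (j - k * (a : ℤ)) *
    Complex.exp (2 * (Real.pi : ℂ) * Complex.I * (l : ℂ) * (j : ℂ) / (M : ℂ)))

/-! ### One-sided exponentials -/

/-- The one-sided exponential density `|δ|⁻¹ e^{-y/δ}` on the half-line where `y / δ > 0`. Its Fourier
transform is `(1 + 2πiδξ)⁻¹`. -/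
noncomputable def expKer (δ y : ℝ) : ℝ := if 0 < y / δ then |δ|⁻¹ * Real.exp (-(y / δ)) else 0

/-- Convolution with `expKer δ`; it inverts the differential operator `1 + δ d/dx`. -/
noncomputable def expConv (δ : ℝ) (f : ℝ → ℝ) (x : ℝ) : ℝ := ∫ s, expKer δ (x - s) * f s

lemma expKer_nonneg (δ y : ℝ) : 0 ≤ expKer δ y := by
  unfold expKer; split_ifs <;> positivity

lemma expKer_neg (δ y : ℝ) : expKer (-δ) (-y) = expKer δ y := by
  simp [expKer, neg_div_neg_eq]

lemma measurable_expKer (δ : ℝ) : Measurable (expKer δ) := by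
  unfold expKer
  refine Measurable.ite (measurableSet_lt measurable_const (by fun_prop)) (by fun_prop) (by fun_prop)

lemma expKer_of_pos {δ : ℝ} (hδ : 0 < δ) :
    expKer δ = (Set.Ioi (0 : ℝ)).indicator (fun y => δ⁻¹ * Real.exp (-(y / δ))) := by
  funext y
  simp only [expKer, Set.indicator, Set.mem_Ioi, div_pos_iff_of_pos_right hδ, abs_of_pos hδ]

lemma integrable_expKer_mul_exp {δ ε : ℝ} (hδ : δ ≠ 0) (hε : ε * |δ| < 1) :
    Integrable (fun y => expKer δ y * Real.exp (ε * |y|)) := by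
  have main : ∀ δ : ℝ, 0 < δ → ε * δ < 1 →
      Integrable (fun y => expKer δ y * Real.exp (ε * |y|)) := by
    intro δ hδ hε
    have h1 : (fun y => expKer δ y * Real.exp (ε * |y|)) =
        (Set.Ioi (0 : ℝ)).indicator (fun y => δ⁻¹ * Real.exp (-(δ⁻¹ - ε) * y)) := by
      funext y
      rw [expKer_of_pos hδ]
      by_cases hy : y ∈ Set.Ioi (0 : ℝ)
      · simp only [Set.indicator_of_mem hy]
        rw [abs_of_pos hy, mul_assoc, ← Real.exp_add]
        congr 2
        ring
      · simp [Set.indicator_of_notMem hy]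
    rw [h1, integrable_indicator_iff measurableSet_Ioi]
    have h2 : ε < δ⁻¹ := by rwa [← one_div, lt_div_iff₀ hδ]
    exact Integrable.const_mul (exp_neg_integrableOn_Ioi 0 (sub_pos.2 h2)) _
  rcases lt_or_gt_of_ne hδ with h | h
  · have := (main (-δ) (by linarith) (by rwa [abs_of_neg h] at hε)).comp_neg
    simpa [expKer_neg] using this
  · exact main δ h (by rwa [abs_of_pos h] at hε)

lemma exp_abs_add_le {ε : ℝ} (hε : 0 ≤ ε) (x y : ℝ) :
    Real.exp (ε * |x + y|) ≤ Real.exp (ε * |x|) * Real.exp (ε * |y|) := by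
  rw [← Real.exp_add, ← mul_add]
  gcongr
  exact abs_add_le x y

lemma exp_neg_abs_add_le {ε : ℝ} (hε : 0 ≤ ε) (x y : ℝ) :
    Real.exp (-(ε * |x + y|)) ≤ Real.exp (-(ε * |x|)) * Real.exp (ε * |y|) := by
  rw [← Real.exp_add]
  gcongr
  have : |x| ≤ |x + y| + |y| := by
    calc |x| = |(x + y) - y| := by ring_nf
      _ ≤ _ := abs_sub _ _
  nlinarith

/-- Exponential growth of rate `ε < 1/|δ|` is still integrable against the kernel. -/
lemma integrable_expKer_sub_mul {δ ε C : ℝ} (hδ : δ ≠ 0) (hε0 : 0 ≤ ε) (hε : ε * |δ| < 1)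
    {f : ℝ → ℝ} (hf : Measurable f) (hC : ∀ s, |f s| ≤ C * Real.exp (ε * |s|)) (x : ℝ) :
    Integrable (fun s => expKer δ (x - s) * f s) := by
  have h1 := ((integrable_expKer_mul_exp hδ hε).comp_sub_left x).const_mul (C * Real.exp (ε * |x|))
  refine h1.mono' ?_ (Filter.Eventually.of_forall fun s => ?_)
  · exact (((measurable_expKer δ).comp (measurable_const.sub measurable_id)).mul hf).aestronglyMeasurable
  · have hC0 : 0 ≤ C := by
      have := (abs_nonneg _).trans (hC 0)
      simpa using this
    rw [Real.norm_eq_abs, abs_mul, abs_of_nonneg (expKer_nonneg _ _)]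
    calc expKer δ (x - s) * |f s| ≤ expKer δ (x - s) * (C * Real.exp (ε * |s|)) := by
          gcongr
          · exact expKer_nonneg _ _
          · exact hC s
      _ ≤ expKer δ (x - s) * (C * (Real.exp (ε * |x|) * Real.exp (ε * |x - s|))) := by
          gcongr
          · exact expKer_nonneg _ _
          · have := exp_abs_add_le hε0 x (s - x)
            rwa [add_sub_cancel, abs_sub_comm s x] at this
      _ = _ := by ring

lemma integral_expKer_sub_mul_le {δ ε C : ℝ} (hδ : δ ≠ 0) (hε0 : 0 ≤ ε) (hε : ε * |δ| < 1)
    {f : ℝ → ℝ} (hC : ∀ s, |f s| ≤ C * Real.exp (-(ε * |s|))) (x : ℝ) :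
    ∫ s, ‖expKer δ (x - s) * f s‖ ≤
      (C * ∫ y, expKer δ y * Real.exp (ε * |y|)) * Real.exp (-(ε * |x|)) := by
  have h1 := ((integrable_expKer_mul_exp hδ hε).comp_sub_left x).const_mul (C * Real.exp (-(ε * |x|)))
  have hC0 : 0 ≤ C := by
    have := (abs_nonneg _).trans (hC 0)
    simpa using this
  calc ∫ s, ‖expKer δ (x - s) * f s‖
      ≤ ∫ s, (C * Real.exp (-(ε * |x|))) * (expKer δ (x - s) * Real.exp (ε * |x - s|)) := by
        refine integral_mono_of_nonneg (Filter.Eventually.of_forall fun s => norm_nonneg _) h1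
          (Filter.Eventually.of_forall fun s => ?_)
        simp only
        rw [Real.norm_eq_abs, abs_mul, abs_of_nonneg (expKer_nonneg _ _)]
        calc expKer δ (x - s) * |f s| ≤ expKer δ (x - s) * (C * Real.exp (-(ε * |s|))) := by
              gcongr
              · exact expKer_nonneg _ _
              · exact hC s
          _ ≤ expKer δ (x - s) * (C * (Real.exp (-(ε * |x|)) * Real.exp (ε * |x - s|))) := by
              gcongr
              · exact expKer_nonneg _ _
              · have := exp_neg_abs_add_le hε0 x (s - x)
                rwa [add_sub_cancel, abs_sub_comm s x] at this
          _ = _ := by ring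
    _ = _ := by
        rw [integral_const_mul, integral_sub_left_eq_self
          (fun y => expKer δ y * Real.exp (ε * |y|)) volume x]
        ring

lemma abs_expConv_le {δ ε C : ℝ} (hδ : δ ≠ 0) (hε0 : 0 ≤ ε) (hε : ε * |δ| < 1)
    {f : ℝ → ℝ} (hC : ∀ s, |f s| ≤ C * Real.exp (-(ε * |s|))) (x : ℝ) :
    |expConv δ f x| ≤ (C * ∫ y, expKer δ y * Real.exp (ε * |y|)) * Real.exp (-(ε * |x|)) :=
  (norm_integral_le_integral_norm _).trans (integral_expKer_sub_mul_le hδ hε0 hε hC x)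

lemma expConv_neg (δ : ℝ) (f : ℝ → ℝ) (x : ℝ) :
    expConv (-δ) (fun s => f (-s)) (-x) = expConv δ f x := by
  unfold expConv
  rw [← integral_neg_eq_self]
  simp only [neg_neg]
  congr 1; funext s
  rw [← expKer_neg δ (x - s)]
  ring_nf

/-- Variation of constants: `expConv δ f` is a multiple of `e^{-x/δ}` times a primitive of
`e^{s/δ} f(s)`. -/
lemma expConv_eq_primitive {δ ε C : ℝ} (hδ : 0 < δ) (hε0 : 0 ≤ ε) (hε : ε * |δ| < 1)
    {f : ℝ → ℝ} (hf : Measurable f) (hC : ∀ s, |f s| ≤ C * Real.exp (ε * |s|)) :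
    (∀ a b, IntervalIntegrable (fun s => Real.exp (s / δ) * f s) volume a b) ∧
    ∃ c : ℝ, ∀ x, expConv δ f x =
      δ⁻¹ * Real.exp (-(x / δ)) * (c + ∫ s in (0:ℝ)..x, Real.exp (s / δ) * f s) := by
  have key : ∀ x s, expKer δ (x - s) * f s = (δ⁻¹ * Real.exp (-(x / δ))) *
      (Set.Iio x).indicator (fun s => Real.exp (s / δ) * f s) s := by
    intro x s
    rw [expKer_of_pos hδ]
    by_cases h : s < x
    · rw [Set.indicator_of_mem (by simpa using h), Set.indicator_of_mem (by simpa using h)]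
      rw [sub_div, neg_sub, sub_eq_add_neg, Real.exp_add]
      ring
    · rw [Set.indicator_of_notMem (by simpa using h), Set.indicator_of_notMem (by simpa using h)]
      simp
  have hI : ∀ x, IntegrableOn (fun s => Real.exp (s / δ) * f s) (Set.Iic x) := by
    intro x
    rw [integrableOn_Iic_iff_integrableOn_Iio, ← integrable_indicator_iff measurableSet_Iio]
    have h1 := integrable_expKer_sub_mul hδ.ne' hε0 hε hf hC x
    simp_rw [key x] at h1
    exact (integrable_const_mul_iff (IsUnit.mk0 _ (by positivity)) _).1 h1
  refine ⟨fun a b => ⟨(hI b).mono_set fun s hs => hs.2, (hI a).mono_set fun s hs => hs.2⟩,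
    ∫ s in Set.Iic 0, Real.exp (s / δ) * f s, fun x => ?_⟩
  rw [← intervalIntegral.integral_Iic_sub_Iic (hI 0) (hI x), add_sub_cancel]
  unfold expConv
  simp_rw [key x]
  rw [integral_const_mul, integral_indicator measurableSet_Iio, integral_Iic_eq_integral_Iio]

/-- `F = expConv δ f` solves `F + δ F' = f` at the continuity points of `f`. The case `δ < 0` follows from
`δ > 0` by reflecting the line. -/
lemma expConv_continuous_and_hasDerivAt {δ ε C : ℝ} (hδ : δ ≠ 0) (hε0 : 0 ≤ ε) (hε : ε * |δ| < 1)
    {f : ℝ → ℝ} (hf : Measurable f) (hC : ∀ s, |f s| ≤ C * Real.exp (ε * |s|)) :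
    Continuous (expConv δ f) ∧ ∀ x, ContinuousAt f x →
      HasDerivAt (expConv δ f) ((f x - expConv δ f x) / δ) x := by
  have main : ∀ (δ : ℝ) (f : ℝ → ℝ), 0 < δ → ε * |δ| < 1 → Measurable f →
      (∀ s, |f s| ≤ C * Real.exp (ε * |s|)) →
      Continuous (expConv δ f) ∧ ∀ x, ContinuousAt f x →
      HasDerivAt (expConv δ f) ((f x - expConv δ f x) / δ) x := by
    intro δ f hδ hε hf hC
    obtain ⟨hInt, c, hc⟩ := expConv_eq_primitive hδ hε0 hε hf hC
    have hfun := funext hc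
    constructor
    · rw [hfun]
      have := intervalIntegral.continuous_primitive hInt 0
      fun_prop
    · intro x hx
      have h1 : HasDerivAt (fun x => ∫ s in (0:ℝ)..x, Real.exp (s / δ) * f s)
          (Real.exp (x / δ) * f x) x := by
        apply intervalIntegral.integral_hasDerivAt_right (hInt 0 x)
        · exact (Measurable.stronglyMeasurable (by fun_prop)).stronglyMeasurableAtFilter
        · exact ContinuousAt.mul (by fun_prop) hx
      have h2 : HasDerivAt (fun x => δ⁻¹ * Real.exp (-(x / δ)))
          (δ⁻¹ * (Real.exp (-(x / δ)) * (-(1 / δ)))) x :=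
        ((((hasDerivAt_id x).div_const δ).neg).exp).const_mul _
      have h3 := h2.mul (h1.const_add c)
      refine (h3.congr_of_eventuallyEq (Filter.Eventually.of_forall hc)).congr_deriv ?_
      rw [hc x]
      have h5 : Real.exp (-(x / δ)) * Real.exp (x / δ) = 1 := by
        rw [← Real.exp_add]; simp
      simp only [div_eq_mul_inv] at h5 ⊢
      linear_combination (δ⁻¹ * f x) * h5
  rcases lt_or_gt_of_ne hδ with h | h
  · obtain ⟨h1, h2⟩ := main (-δ) (fun s => f (-s)) (by linarith) (by rwa [abs_neg])
      (hf.comp measurable_neg) (fun s => by simpa using hC (-s))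
    have h3 : expConv δ f = fun x => expConv (-δ) (fun s => f (-s)) (-x) :=
      funext fun x => (expConv_neg δ f x).symm
    constructor
    · rw [h3]; fun_prop
    · intro x hx
      have h4 := (h2 (-x) (ContinuousAt.comp (by simpa using hx) continuous_neg.continuousAt)).comp x
        (hasDerivAt_neg x)
      refine (h4.congr_of_eventuallyEq (Filter.Eventually.of_forall fun y => ?_)).congr_deriv ?_
      · exact (expConv_neg δ f y).symm
      · rw [expConv_neg, neg_neg]
        field_simp
  · exact main δ f h hε hf hC

lemma fourier_expKer {δ : ℝ} (hδ : δ ≠ 0) (ξ : ℝ) :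
    𝓕 (fun y : ℝ => (expKer δ y : ℂ)) ξ =
      (1 + 2 * (Real.pi : ℂ) * Complex.I * (δ : ℂ) * (ξ : ℂ))⁻¹ := by
  have main : ∀ δ : ℝ, 0 < δ → ∀ ξ : ℝ, 𝓕 (fun y : ℝ => (expKer δ y : ℂ)) ξ =
      (1 + 2 * (Real.pi : ℂ) * Complex.I * (δ : ℂ) * (ξ : ℂ))⁻¹ := by
    intro δ hδ ξ
    rw [Real.fourier_eq']
    have hδc : (δ : ℂ) ≠ 0 := by exact_mod_cast hδ.ne'
    have h1 : ∀ v : ℝ, cexp (↑(-2 * Real.pi * inner ℝ v ξ) * I) • (expKer δ v : ℂ) =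
        (Set.Ioi (0 : ℝ)).indicator
          (fun v : ℝ => (δ : ℂ)⁻¹ * cexp ((-(1 / δ + 2 * Real.pi * ξ * I)) * v)) v := by
      intro v
      rw [expKer_of_pos hδ]
      by_cases hv : v ∈ Set.Ioi (0 : ℝ)
      · simp only [Set.indicator_of_mem hv]
        push_cast
        rw [smul_eq_mul, mul_left_comm, ← Complex.exp_add]
        congr 2
        simp
        field_simp
      · simp [Set.indicator_of_notMem hv]
    simp_rw [h1]
    have hre : (-(1 / (δ : ℂ) + 2 * Real.pi * ξ * I)).re < 0 := by
      have : (-(1 / (δ : ℂ) + 2 * Real.pi * ξ * I)) =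
        ((-(1 / δ) : ℝ) : ℂ) + ((-(2 * Real.pi * ξ) : ℝ) : ℂ) * I := by push_cast; ring
      rw [this, Complex.add_re, Complex.ofReal_re, Complex.re_ofReal_mul, Complex.I_re]
      simpa using hδ
    have hne : (-(1 / (δ : ℂ) + 2 * Real.pi * ξ * I)) ≠ 0 := by
      intro h; rw [h] at hre; simp at hre
    rw [integral_indicator measurableSet_Ioi, integral_const_mul,
      integral_exp_mul_complex_Ioi hre]
    simp only [Complex.ofReal_zero, mul_zero, Complex.exp_zero]
    rw [neg_div_neg_eq, ← one_div, div_mul_div_comm, ← one_div]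
    congr 1
    · ring
    · field_simp
  rcases lt_or_gt_of_ne hδ with h | h
  · have h1 := main (-δ) (by linarith) (-ξ)
    rw [show (1 + 2 * (Real.pi : ℂ) * Complex.I * (δ : ℂ) * (ξ : ℂ)) =
      (1 + 2 * (Real.pi : ℂ) * Complex.I * ((-δ : ℝ) : ℂ) * ((-ξ : ℝ) : ℂ)) by push_cast; ring,
      ← h1, Real.fourier_eq', Real.fourier_eq', ← integral_neg_eq_self]
    congr 1; funext v
    rw [← expKer_neg δ (-v)]
    simp
  · exact main δ h ξ

/-! ### Convolution chains -/

lemma exp_neg_abs_le {ε : ℝ} (hε : 0 < ε) (x : ℝ) :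
    Real.exp (-(ε * |x|)) ≤ (1 + 2 / ε ^ 2) * (1 + x ^ 2)⁻¹ := by
  have h1 := Real.quadratic_le_exp_of_nonneg (x := ε * |x|) (by positivity)
  rw [Real.exp_neg, ← div_eq_mul_inv, inv_eq_one_div, div_le_div_iff₀ (Real.exp_pos _) (by positivity)]
  have h2 : 1 + x ^ 2 ≤ (1 + 2 / ε ^ 2) * (1 + (ε * |x|) ^ 2 / 2) := by
    rw [mul_pow, sq_abs]
    have : (1 + 2 / ε ^ 2) * (1 + ε ^ 2 * x ^ 2 / 2) =
      1 + x ^ 2 + (2 / ε ^ 2 + ε ^ 2 * x ^ 2 / 2) := by field_simp; ring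
    rw [this]
    have : 0 ≤ 2 / ε ^ 2 + ε ^ 2 * x ^ 2 / 2 := by positivity
    linarith
  have h3 : 0 ≤ ε * |x| := by positivity
  calc 1 * (1 + x ^ 2) ≤ (1 + 2 / ε ^ 2) * (1 + (ε * |x|) ^ 2 / 2) := by linarith
    _ ≤ _ := by gcongr; linarith

lemma integrable_of_exp_decay {f : ℝ → ℝ} {ε C : ℝ} (hε : 0 < ε) (hf : Measurable f)
    (hC : ∀ x, |f x| ≤ C * Real.exp (-(ε * |x|))) : Integrable f := by
  have hC0 : 0 ≤ C := by
    have := (abs_nonneg _).trans (hC 0)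
    simpa using this
  refine (integrable_inv_one_add_sq.const_mul (C * (1 + 2 / ε ^ 2))).mono' hf.aestronglyMeasurable
    (Filter.Eventually.of_forall fun x => ?_)
  rw [mul_assoc]
  exact (hC x).trans (by gcongr; exact exp_neg_abs_le hε x)

/-- The iterated convolution `expKer (d 0) * ⋯ * expKer (d k)`: the totally positive function of finite
type `k + 1` with parameters `d 0, …, d k`. -/
noncomputable def tpChain (d : ℕ → ℝ) : ℕ → ℝ → ℝ
  | 0 => expKer (d 0)
  | k + 1 => expConv (d (k + 1)) (tpChain d k)

lemma expKer_le {δ ε : ℝ} (hδ : δ ≠ 0) (hε : ε * |δ| < 1) (x : ℝ) :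
    |expKer δ x| ≤ |δ|⁻¹ * Real.exp (-(ε * |x|)) := by
  rw [abs_of_nonneg (expKer_nonneg _ _)]
  unfold expKer
  split_ifs with h
  · gcongr
    rw [← abs_of_pos h, abs_div, le_div_iff₀ (abs_pos.2 hδ)]
    nlinarith [abs_nonneg x]
  · positivity

section Chain

variable {d : ℕ → ℝ} {ε : ℝ}

lemma decay_to_growth {f : ℝ → ℝ} {C ε : ℝ} (hε : 0 < ε)
    (hC : ∀ x, |f x| ≤ C * Real.exp (-(ε * |x|))) (x : ℝ) : |f x| ≤ C * Real.exp (ε * |x|) := by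
  have hC0 : 0 ≤ C := by
    have := (abs_nonneg _).trans (hC 0)
    simpa using this
  refine (hC x).trans ?_
  gcongr
  have : 0 ≤ ε * |x| := by positivity
  linarith

lemma tpChain_measurable_decay (hd : ∀ i, d i ≠ 0) (hε0 : 0 < ε) (hε : ∀ i, ε * |d i| < 1) (k : ℕ) :
    Measurable (tpChain d k) ∧ ∃ C, ∀ x, |tpChain d k x| ≤ C * Real.exp (-(ε * |x|)) := by
  induction k with
  | zero => exact ⟨measurable_expKer _, _, expKer_le (hd 0) (hε 0)⟩
  | succ k ih =>
    obtain ⟨hm, C, hC⟩ := ih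
    refine ⟨?_, _, abs_expConv_le (hd (k + 1)) hε0.le (hε (k + 1)) hC⟩
    exact (expConv_continuous_and_hasDerivAt (hd (k + 1)) hε0.le (hε (k + 1)) hm
      (decay_to_growth hε0 hC)).1.measurable

lemma tpChain_succ_continuous (hd : ∀ i, d i ≠ 0) (hε0 : 0 < ε) (hε : ∀ i, ε * |d i| < 1) (k : ℕ) :
    Continuous (tpChain d (k + 1)) := by
  obtain ⟨hm, C, hC⟩ := tpChain_measurable_decay hd hε0 hε k
  exact (expConv_continuous_and_hasDerivAt (hd (k + 1)) hε0.le (hε (k + 1)) hm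
      (decay_to_growth hε0 hC)).1

lemma tpChain_fourier (hd : ∀ i, d i ≠ 0) (hε0 : 0 < ε) (hε : ∀ i, ε * |d i| < 1) (k : ℕ) (ξ : ℝ) :
    𝓕 (fun x : ℝ => (tpChain d k x : ℂ)) ξ = ∏ i ∈ Finset.range (k + 1),
      (1 + 2 * (Real.pi : ℂ) * Complex.I * (d i : ℂ) * (ξ : ℂ))⁻¹ := by
  induction k with
  | zero => simpa [tpChain] using fourier_expKer (hd 0) ξ
  | succ k ih =>
    obtain ⟨hm, C, hC⟩ := tpChain_measurable_decay hd hε0 hε k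
    have h1 : Integrable (fun x : ℝ => (tpChain d k x : ℂ)) := (integrable_of_exp_decay hε0 hm hC).ofReal
    have h2 : Integrable (fun x : ℝ => (expKer (d (k + 1)) x : ℂ)) :=
      (integrable_of_exp_decay hε0 (measurable_expKer _) (expKer_le (hd (k+1)) (hε (k+1)))).ofReal
    have h3 := Real.fourier_mul_convolution_eq h1 h2 ξ
    rw [Finset.prod_range_succ, ← ih, ← fourier_expKer (hd (k + 1)) ξ, ← h3]
    refine congrArg (fun F : ℝ → ℂ => 𝓕 F ξ) (funext fun x => ?_)
    simp only [tpChain, expConv, convolution_def, ContinuousLinearMap.mul_apply']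
    rw [← integral_complex_ofReal]
    congr 1; funext s; push_cast; ring

end Chain

/-! ### Twisted periodizations -/

/-- The periodization `∑ₙ a n · f (x + nM)` of `f`, weighted by a bounded sequence `a`. With
`a n = Re (c zⁿ)` it is the real part of a multiple of the Zak transform of `f`. -/
noncomputable def zak (a : ℤ → ℝ) (M : ℕ) (f : ℝ → ℝ) (x : ℝ) : ℝ := ∑' n : ℤ, a n * f (x + n * M)

lemma summable_exp_neg_int {ε : ℝ} (hε : 0 < ε) {M : ℕ} (hM : 0 < M) :
    Summable (fun n : ℤ => Real.exp (-(ε * |(n : ℝ) * M|))) := by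
  have hM' : (0 : ℝ) < M := by exact_mod_cast hM
  have h : Summable (fun n : ℕ => Real.exp (n * (-(ε * M)))) :=
    Real.summable_exp_nat_mul_iff.2 (by simp; positivity)
  apply Summable.of_nat_of_neg <;>
  · refine h.congr fun n => ?_
    simp only [Int.cast_neg, neg_mul, abs_neg, Int.cast_natCast]
    rw [abs_of_nonneg (by positivity)]
    congr 1; ring

section Zak
variable {a : ℤ → ℝ} {D C ε : ℝ} {M : ℕ} {f : ℝ → ℝ}

lemma zak_term_le (hε : 0 < ε) (ha : ∀ n, |a n| ≤ D)
    (hC : ∀ x, |f x| ≤ C * Real.exp (-(ε * |x|))) (x : ℝ) (n : ℤ) :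
    ‖a n * f (x + n * M)‖ ≤
      (D * C * Real.exp (ε * |x|)) * Real.exp (-(ε * |(n : ℝ) * M|)) := by
  have hC0 : 0 ≤ C := by
    have := (abs_nonneg _).trans (hC 0)
    simpa using this
  have hD0 : 0 ≤ D := (abs_nonneg _).trans (ha 0)
  rw [Real.norm_eq_abs, abs_mul]
  calc |a n| * |f (x + n * M)| ≤ D * (C * Real.exp (-(ε * |x + n * M|))) := by
        gcongr
        · exact ha n
        · exact hC _
    _ ≤ D * (C * (Real.exp (-(ε * |(n : ℝ) * M|)) * Real.exp (ε * |x|))) := by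
        gcongr
        rw [add_comm]
        exact exp_neg_abs_add_le hε.le _ _
    _ = _ := by ring

lemma zak_summable (hε : 0 < ε) (hM : 0 < M) (ha : ∀ n, |a n| ≤ D)
    (hC : ∀ x, |f x| ≤ C * Real.exp (-(ε * |x|))) (x : ℝ) :
    Summable (fun n : ℤ => a n * f (x + n * M)) :=
  Summable.of_norm_bounded ((summable_exp_neg_int hε hM).mul_left _) (zak_term_le hε ha hC x)

lemma zak_growth (hε : 0 < ε) (hM : 0 < M) (ha : ∀ n, |a n| ≤ D)
    (hC : ∀ x, |f x| ≤ C * Real.exp (-(ε * |x|))) (x : ℝ) :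
    |zak a M f x| ≤ (D * C * ∑' n : ℤ, Real.exp (-(ε * |(n : ℝ) * M|))) * Real.exp (ε * |x|) := by
  have := tsum_of_norm_bounded ((summable_exp_neg_int hε hM).mul_left _).hasSum
    (zak_term_le (M := M) hε ha hC x)
  rw [tsum_mul_left] at this
  refine this.trans (le_of_eq (by ring))

lemma zak_measurable (hε : 0 < ε) (hM : 0 < M) (ha : ∀ n, |a n| ≤ D) (hf : Measurable f)
    (hC : ∀ x, |f x| ≤ C * Real.exp (-(ε * |x|))) : Measurable (zak a M f) := by
  refine measurable_of_tendsto_metrizable' (Filter.atTop : Filter (Finset ℤ))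
    (f := fun s x => ∑ n ∈ s, a n * f (x + n * M)) (fun s => ?_) ?_
  · exact Finset.measurable_sum _ fun n _ => by fun_prop
  · rw [tendsto_pi_nhds]
    exact fun x => (zak_summable hε hM ha hC x).hasSum

/-- Periodization commutes with convolution. -/
lemma zak_expConv {δ : ℝ} (hδ : δ ≠ 0) (hε : 0 < ε) (hεδ : ε * |δ| < 1) (hM : 0 < M)
    (ha : ∀ n, |a n| ≤ D) (hf : Measurable f)
    (hC : ∀ x, |f x| ≤ C * Real.exp (-(ε * |x|))) :
    zak a M (expConv δ f) = expConv δ (zak a M f) := by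
  funext x
  have hterm : ∀ n : ℤ, ∀ s, |a n * f (s + n * M)| ≤
      (|a n| * (C * Real.exp (ε * |(n : ℝ) * M|))) * Real.exp (ε * |s|) := by
    intro n s
    rw [abs_mul, mul_assoc]
    have hC0 : 0 ≤ C := by
      have := (abs_nonneg _).trans (hC 0)
      simpa using this
    gcongr
    refine (decay_to_growth hε hC _).trans ?_
    rw [mul_assoc]
    gcongr
    rw [add_comm]
    exact exp_abs_add_le hε.le _ _
  have h1 : ∀ n : ℤ, Integrable (fun s => expKer δ (x - s) * (a n * f (s + n * M))) := fun n =>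
    integrable_expKer_sub_mul hδ hε.le hεδ (by fun_prop) (hterm n) x
  have h3 : ∀ n : ℤ, ∀ h : ℝ → ℝ → ℝ,
      (∫ s, h (x - s) (s + n * M)) = ∫ s, h (x + n * M - s) s := by
    intro n h
    rw [← integral_add_right_eq_self (fun s => h (x + n * M - s) s) ((n : ℝ) * M)]
    congr 1; funext s; congr 1; ring
  have h4 : Summable fun n : ℤ => ∫ s, ‖expKer δ (x - s) * (a n * f (s + n * M))‖ := by
    refine Summable.of_nonneg_of_le (fun n => integral_nonneg fun s => norm_nonneg _) (fun n => ?_)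
      ((summable_exp_neg_int hε hM).mul_left
        (D * (C * ∫ y, expKer δ y * Real.exp (ε * |y|)) * Real.exp (ε * |x|)))
    rw [h3 n (fun u v => ‖expKer δ u * (a n * f v)‖)]
    have h5 := integral_expKer_sub_mul_le hδ hε.le hεδ hC (x + n * M)
    have h6 : 0 ≤ C * ∫ y, expKer δ y * Real.exp (ε * |y|) := by
      have hC0 : 0 ≤ C := by
        have := (abs_nonneg _).trans (hC 0)
        simpa using this
      exact mul_nonneg hC0 (integral_nonneg fun y => mul_nonneg (expKer_nonneg _ _) (by positivity))
    have hD0 : 0 ≤ D := (abs_nonneg _).trans (ha 0)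
    calc ∫ s, ‖expKer δ (x + n * M - s) * (a n * f s)‖
        = |a n| * ∫ s, ‖expKer δ (x + n * M - s) * f s‖ := by
          rw [← integral_const_mul]
          congr 1; funext s
          simp only [norm_mul, Real.norm_eq_abs]; ring
      _ ≤ D * ((C * ∫ y, expKer δ y * Real.exp (ε * |y|)) *
            (Real.exp (-(ε * |(n : ℝ) * M|)) * Real.exp (ε * |x|))) := by
          gcongr
          · exact ha n
          · refine h5.trans ?_
            gcongr
            rw [add_comm]
            exact exp_neg_abs_add_le hε.le _ _
      _ = _ := by ring
  have h7 := integral_tsum_of_summable_integral_norm h1 h4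
  unfold zak expConv
  simp_rw [tsum_mul_left] at h7
  rw [← h7]
  congr 1; funext n
  rw [← integral_const_mul, h3 n (fun u v => expKer δ u * (a n * f v))]
  congr 1; funext s; ring

end Zak

/-! ### Counting zeros -/

/-- Between two zeros of `expConv δ f` lies a zero of `f`: Rolle's theorem applied to
`x ↦ e^{x/δ} expConv δ f x`, whose derivative is `δ⁻¹ e^{x/δ} f x`. -/
lemma expConv_rolle {δ ε C : ℝ} (hδ : δ ≠ 0) (hε0 : 0 ≤ ε) (hε : ε * |δ| < 1)
    {f : ℝ → ℝ} (hf : Measurable f) (hC : ∀ s, |f s| ≤ C * Real.exp (ε * |s|)) {a b : ℝ}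
    (hab : a < b) (ha : expConv δ f a = 0) (hb : expConv δ f b = 0)
    (hcont : ∀ x ∈ Set.Ioo a b, ContinuousAt f x) : ∃ c ∈ Set.Ioo a b, f c = 0 := by
  obtain ⟨h1, h2⟩ := expConv_continuous_and_hasDerivAt hδ hε0 hε hf hC
  obtain ⟨c, hc, h⟩ := exists_hasDerivAt_eq_zero (f := fun x => Real.exp (x / δ) * expConv δ f x)
    (f' := fun x => Real.exp (x / δ) * (1 / δ) * expConv δ f x +
      Real.exp (x / δ) * ((f x - expConv δ f x) / δ)) hab (by fun_prop) (by simp [ha, hb])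
    (fun x hx => (((hasDerivAt_id x).div_const δ).exp).mul (h2 x (hcont x hx)))
  refine ⟨c, hc, ?_⟩
  have h3 : Real.exp (c / δ) * (1 / δ) * f c = 0 := by rw [← h]; ring
  simpa [hδ, Real.exp_ne_zero] using h3

/-- `f` has an increasing sequence of zeros on `[0, ∞)` with asymptotically at least two zeros per period
`M`; the offset `s` measures how many of them may be missing from the start. -/
def ManyZeros (M : ℕ) (f : ℝ → ℝ) (s : ℕ) : Prop :=
  ∃ x : ℕ → ℝ, StrictMono x ∧ (∀ i, f (x i) = 0) ∧ (∀ i, 0 ≤ x i) ∧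
    ∀ i, x i < M * ((i : ℝ) + s) / 2

section Zeros
variable {d : ℕ → ℝ} {ε D : ℝ} {a : ℤ → ℝ} {M : ℕ}

lemma zak_tpChain_succ (hd : ∀ i, d i ≠ 0) (hε0 : 0 < ε) (hε : ∀ i, ε * |d i| < 1)
    (hM : 0 < M) (ha : ∀ n, |a n| ≤ D) (k : ℕ) :
    zak a M (tpChain d (k + 1)) = expConv (d (k + 1)) (zak a M (tpChain d k)) := by
  obtain ⟨hm, C, hC⟩ := tpChain_measurable_decay hd hε0 hε k
  exact zak_expConv (hd _) hε0 (hε _) hM ha hm hC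

lemma zak_tpChain_measurable_growth (hd : ∀ i, d i ≠ 0) (hε0 : 0 < ε) (hε : ∀ i, ε * |d i| < 1)
    (hM : 0 < M) (ha : ∀ n, |a n| ≤ D) (k : ℕ) :
    Measurable (zak a M (tpChain d k)) ∧
      ∃ C, ∀ x, |zak a M (tpChain d k) x| ≤ C * Real.exp (ε * |x|) := by
  obtain ⟨hm, C, hC⟩ := tpChain_measurable_decay hd hε0 hε k
  exact ⟨zak_measurable hε0 hM ha hm hC, _, zak_growth hε0 hM ha hC⟩

/-- One Rolle step removes one exponential factor and costs at most one zero. -/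
lemma manyZeros_step (hd : ∀ i, d i ≠ 0) (hε0 : 0 < ε) (hε : ∀ i, ε * |d i| < 1)
    (hM : 0 < M) (ha : ∀ n, |a n| ≤ D) (k s : ℕ)
    (h : ManyZeros M (zak a M (tpChain d (k + 2))) s) :
    ManyZeros M (zak a M (tpChain d (k + 1))) (s + 1) := by
  obtain ⟨x, hx, h0, hpos, hle⟩ := h
  obtain ⟨hm, C, hC⟩ := zak_tpChain_measurable_growth hd hε0 hε hM ha (k + 1)
  have hcont : Continuous (zak a M (tpChain d (k + 1))) := by
    obtain ⟨hm, C, hC⟩ := zak_tpChain_measurable_growth hd hε0 hε hM ha k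
    rw [zak_tpChain_succ hd hε0 hε hM ha]
    exact (expConv_continuous_and_hasDerivAt (hd _) hε0.le (hε _) hm hC).1
  rw [zak_tpChain_succ hd hε0 hε hM ha] at h0
  choose y hy hy0 using fun i => expConv_rolle (hd _) hε0.le (hε _) hm hC
    (hx (Nat.lt_succ_self i)) (h0 i) (h0 (i + 1)) (fun x _ => hcont.continuousAt)
  refine ⟨y, strictMono_nat_of_lt_succ fun i => (hy i).2.trans (hy (i + 1)).1, hy0,
    fun i => (hpos i).trans (hy i).1.le, fun i => (hy i).2.trans ((hle _).trans_le (le_of_eq ?_))⟩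
  push_cast; ring

lemma manyZeros_descent (hd : ∀ i, d i ≠ 0) (hε0 : 0 < ε) (hε : ∀ i, ε * |d i| < 1)
    (hM : 0 < M) (ha : ∀ n, |a n| ≤ D) (k : ℕ) : ∀ s,
    ManyZeros M (zak a M (tpChain d (k + 1))) s → ∃ s', ManyZeros M (zak a M (tpChain d 1)) s' := by
  induction k with
  | zero => exact fun s h => ⟨s, h⟩
  | succ k ih => exact fun s h => ih _ (manyZeros_step hd hε0 hε hM ha k s h)

/-- If the periodization of the first exponential has no zero and no jump inside the periods
`(jM, (j+1)M)`, Rolle allows at most one zero per period one level up, which is too few. -/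
lemma not_manyZeros_one (hd : ∀ i, d i ≠ 0) (hε0 : 0 < ε) (hε : ∀ i, ε * |d i| < 1)
    (hM : 0 < M) (ha : ∀ n, |a n| ≤ D) (s : ℕ)
    (h0 : ∀ j : ℕ, ∀ x ∈ Set.Ioo ((j : ℝ) * M) (((j : ℝ) + 1) * M),
      zak a M (expKer (d 0)) x ≠ 0 ∧ ContinuousAt (zak a M (expKer (d 0))) x) :
    ¬ ManyZeros M (zak a M (tpChain d 1)) s := by
  rintro ⟨x, hx, hz, hpos, hle⟩
  have hM' : (0 : ℝ) < M := by exact_mod_cast hM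
  obtain ⟨hm, C, hC⟩ := zak_tpChain_measurable_growth hd hε0 hε hM ha 0
  rw [zak_tpChain_succ hd hε0 hε hM ha] at hz
  have hfl : ∀ i, (⌊x i / M⌋₊ : ℝ) * M ≤ x i ∧ x i < ((⌊x i / M⌋₊ : ℝ) + 1) * M := fun i =>
    ⟨(le_div_iff₀ hM').1 (Nat.floor_le (div_nonneg (hpos i) hM'.le)),
      (div_lt_iff₀ hM').1 (Nat.lt_floor_add_one _)⟩
  -- Two consecutive zeros in one period contradict Rolle, so the period index strictly increases.
  have hmono : StrictMono fun i => ⌊x i / M⌋₊ := by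
    refine strictMono_nat_of_lt_succ fun i => lt_of_le_of_ne ?_ fun heq => ?_
    · exact Nat.floor_mono (by gcongr; exact hx.monotone (Nat.le_succ i))
    · have hsub : ∀ y ∈ Set.Ioo (x i) (x (i + 1)), y ∈ Set.Ioo
          ((⌊x i / M⌋₊ : ℝ) * M) (((⌊x i / M⌋₊ : ℝ) + 1) * M) := fun y hy =>
        ⟨(hfl i).1.trans_lt hy.1, hy.2.trans (by rw [heq]; exact (hfl (i + 1)).2)⟩
      obtain ⟨c, hc, hc0⟩ := expConv_rolle (hd _) hε0.le (hε _) hm hC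
        (hx (Nat.lt_succ_self i)) (hz i) (hz (i + 1)) (fun y hy => (h0 _ y (hsub y hy)).2)
      exact (h0 _ c (hsub c hc)).1 hc0
  -- Hence `x s ≥ s M`, while `x s < M (s + s) / 2`.
  have h1 : s ≤ ⌊x s / M⌋₊ := hmono.le_apply
  have h2 : (s : ℝ) ≤ (⌊x s / M⌋₊ : ℝ) := by exact_mod_cast h1
  have h3 := (hfl s).1
  have h4 := hle s
  nlinarith

end Zeros

lemma hasSum_int_geometric_tail {w : ℂ} (hw0 : w ≠ 0) (hw : ‖w‖ < 1) (j : ℤ) :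
    HasSum (fun n : ℤ => if -j ≤ n then w ^ n else 0) (w ^ (-j) * (1 - w)⁻¹) := by
  have hinj : Function.Injective (fun i : ℕ => (i : ℤ) - j) := fun a b h => by
    simp only at h; omega
  rw [← hinj.hasSum_iff]
  · refine ((hasSum_geometric_of_norm_lt_one hw).mul_left (w ^ (-j))).congr_fun ?_
    intro i
    simp only [Function.comp]
    rw [if_pos (by omega), sub_eq_neg_add, zpow_add₀ hw0, zpow_natCast]
  · intro n hn
    rw [if_neg]
    intro h
    exact hn ⟨(n + j).toNat, by simp only; omega⟩

/-- Inside the period `(jM, (j+1)M)` only the shifts `n ≥ -j` contribute, and the periodization is a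
geometric series. -/
lemma zak_expKer_eq {δ : ℝ} (hδ : 0 < δ) {M : ℕ} (hM : 0 < M) {z : ℂ} (hz : ‖z‖ = 1) (c : ℂ)
    (j : ℤ) {x : ℝ} (hx : x ∈ Set.Ioo ((j : ℝ) * M) (((j : ℝ) + 1) * M)) :
    zak (fun n => (c * z ^ n).re) M (expKer δ) x = δ⁻¹ * Real.exp (-(x / δ)) *
      (c * ((z * (Real.exp (-(M / δ)) : ℝ)) ^ (-j) * (1 - z * (Real.exp (-(M / δ)) : ℝ))⁻¹)).re := by
  set q : ℝ := Real.exp (-(M / δ)) with hq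
  have hM' : (0 : ℝ) < M := by exact_mod_cast hM
  have hq0 : 0 < q := Real.exp_pos _
  have hq1 : q < 1 := by rw [hq, Real.exp_lt_one_iff]; simp; positivity
  have hz0 : z ≠ 0 := by rintro rfl; simp at hz
  have hqc : (q : ℂ) ≠ 0 := by exact_mod_cast hq0.ne'
  have hs := hasSum_int_geometric_tail (w := z * q) (mul_ne_zero hz0 hqc)
    (by rw [norm_mul, hz, one_mul, Complex.norm_real, Real.norm_of_nonneg hq0.le]; exact hq1) j
  have hs2 := Complex.reCLM.hasSum ((hs.mul_left c).mul_left ((δ⁻¹ * Real.exp (-(x / δ)) : ℝ) : ℂ))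
  rw [Complex.reCLM_apply, Complex.re_ofReal_mul] at hs2
  unfold zak
  rw [← hs2.tsum_eq]
  congr 1; funext n
  rw [Complex.reCLM_apply, Complex.re_ofReal_mul]
  rw [expKer_of_pos hδ]
  by_cases h : -j ≤ n
  · have h1 : 0 < x + n * M := by
      have : (-j : ℝ) ≤ n := by exact_mod_cast h
      nlinarith [hx.1]
    rw [if_pos h, Set.indicator_of_mem (by exact h1), mul_zpow, ← mul_assoc c,
      ← Complex.ofReal_zpow, mul_comm (c * z ^ n), Complex.re_ofReal_mul]
    have h2 : Real.exp (-((x + n * M) / δ)) = Real.exp (-(x / δ)) * q ^ n := by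
      rw [hq, ← Real.rpow_intCast, ← Real.exp_mul, ← Real.exp_add]
      congr 1; ring
    rw [h2]; ring
  · have h1 : ¬ 0 < x + n * M := by
      have : (n : ℝ) + 1 ≤ -j := by exact_mod_cast (by omega : n + 1 ≤ -j)
      nlinarith [hx.2]
    rw [if_neg h, Set.indicator_of_notMem (by exact h1)]
    simp

/-- Each `w j` excludes at most one `s` among the scalars `1 + s i`, so some scalar avoids all of them. -/
lemma exists_generic_scalar (w : ℕ → ℂ) (hw : ∀ j, w j ≠ 0) :
    ∃ c : ℂ, ∀ j, (c * w j).re ≠ 0 := by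
  have hcount : (⋃ j, {s : ℝ | ((1 + s * I) * w j).re = 0}).Countable := by
    refine Set.countable_iUnion fun j => Set.Subsingleton.countable fun s hs t ht => ?_
    simp only [Set.mem_ofPred_eq, Complex.mul_re, Complex.add_re, Complex.one_re, Complex.add_im,
      Complex.one_im, Complex.ofReal_re, Complex.ofReal_im, Complex.I_re, Complex.I_im,
      Complex.mul_im] at hs ht
    have h1 : (s - t) * (w j).im = 0 := by linarith
    rcases mul_eq_zero.1 h1 with h | h
    · linarith
    · exact absurd (Complex.ext (by simp; rw [h] at hs; linarith) (by simpa using h)) (hw j)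
  obtain ⟨s, hs⟩ : ∃ s : ℝ, s ∉ ⋃ j, {s : ℝ | ((1 + s * I) * w j).re = 0} := by
    by_contra hcon
    push Not at hcon
    exact Set.not_countable_univ (hcount.mono fun s _ => hcon s)
  refine ⟨1 + s * I, fun j h => hs (Set.mem_iUnion.2 ⟨j, h⟩)⟩

/-- The Zak transform of a totally positive function has no two distinct zeros `p`, `M - p` per period on
the same fibre `z`: multiplying by a generic scalar and taking real parts gives a real periodization
with two zeros in every period, and Rolle descent reaches a single exponential, which has none. -/
theorem zak_tpChain_not_two_zeros {d : ℕ → ℝ} {ε : ℝ} (hd : ∀ i, d i ≠ 0) (hd0 : 0 < d 0)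
    (hε0 : 0 < ε) (hε : ∀ i, ε * |d i| < 1) {M : ℕ} (hM : 0 < M) {z : ℂ} (hz : ‖z‖ = 1) (k : ℕ)
    {p : ℝ} (hp0 : 0 < p) (hpM : p < M / 2)
    (h : ∀ j : ℕ, ∑' n : ℤ, z ^ n * (tpChain d (k + 1) (p + j * M + n * M) : ℂ) = 0)
    (h' : ∀ j : ℕ, ∑' n : ℤ, z ^ n * (tpChain d (k + 1) (M - p + j * M + n * M) : ℂ) = 0) :
    False := by
  have hz0 : z ≠ 0 := by rintro rfl; simp at hz
  set q : ℝ := Real.exp (-(M / d 0)) with hq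
  have hM' : (0 : ℝ) < M := by exact_mod_cast hM
  have hq0 : 0 < q := Real.exp_pos _
  have hq1 : q < 1 := by rw [hq, Real.exp_lt_one_iff]; simp; positivity
  have hqc : (q : ℂ) ≠ 0 := by exact_mod_cast hq0.ne'
  have hne1 : 1 - z * (q : ℂ) ≠ 0 := by
    intro hcon
    have h1 : z * (q : ℂ) = 1 := (sub_eq_zero.1 hcon).symm
    have h2 := congrArg norm h1
    rw [norm_mul, hz, one_mul, Complex.norm_real, Real.norm_of_nonneg hq0.le, norm_one] at h2
    linarith
  -- The values of the geometric series from `zak_expKer_eq`, one for each period, all nonzero.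
  obtain ⟨c, hc⟩ := exists_generic_scalar
    (fun j : ℕ => (z * (q : ℂ)) ^ (-(j : ℤ)) * (1 - z * (q : ℂ))⁻¹)
    (fun j => mul_ne_zero (zpow_ne_zero _ (mul_ne_zero hz0 hqc)) (inv_ne_zero hne1))
  set a : ℤ → ℝ := fun n => (c * z ^ n).re with ha_def
  have ha : ∀ n, |a n| ≤ ‖c‖ := fun n => by
    refine (Complex.abs_re_le_norm _).trans ?_
    rw [norm_mul, norm_zpow, hz, one_zpow, mul_one]
  have hzero : ∀ x : ℝ, ∑' n : ℤ, z ^ n * (tpChain d (k + 1) (x + n * M) : ℂ) = 0 →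
      zak a M (tpChain d (k + 1)) x = 0 := by
    intro x hx
    obtain ⟨hm, C, hC⟩ := tpChain_measurable_decay hd hε0 hε (k + 1)
    have hsum : Summable fun n : ℤ => z ^ n * (tpChain d (k + 1) (x + n * M) : ℂ) := by
      have := (zak_summable (a := fun _ => 1) (D := 1) hε0 hM (by simp) hC x).norm
      refine Summable.of_norm (this.congr fun n => ?_)
      simp [norm_zpow, hz]
    have h1 := Complex.reCLM.hasSum (hsum.hasSum.mul_left c)
    rw [hx] at h1
    simp only [mul_zero, map_zero] at h1
    unfold zak
    rw [← h1.tsum_eq]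
    congr 1; funext n
    rw [Complex.reCLM_apply, ← mul_assoc, mul_comm (c * z ^ n), Complex.re_ofReal_mul, mul_comm]
  -- The zeros `p, M - p, p + M, 2M - p, …`; `p < M / 2` keeps them in increasing order.
  have hmany : ManyZeros M (zak a M (tpChain d (k + 1))) 1 := by
    refine ⟨fun i => if Even i then p + ((i / 2 : ℕ) : ℝ) * M else M - p + ((i / 2 : ℕ) : ℝ) * M,
      strictMono_nat_of_lt_succ fun i => ?_, fun i => ?_, fun i => ?_, fun i => ?_⟩
    · rcases Nat.even_or_odd' i with ⟨t, rfl | rfl⟩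
      · have h1 : (2 * t + 1) / 2 = t := by omega
        have h2 : (2 * t) / 2 = t := by omega
        simp only [even_two_mul, if_true, Nat.even_add_one, not_true, if_false, h1, h2]
        linarith
      · have h1 : (2 * t + 1) / 2 = t := by omega
        have h2 : (2 * t + 1 + 1) / 2 = t + 1 := by omega
        simp only [even_two_mul, if_true, Nat.even_add_one, not_true, if_false, h1, h2, not_false_iff]
        push_cast
        linarith
    · by_cases hi : Even i
      · simp only [hi, if_true]; exact hzero _ (h _)
      · simp only [hi, if_false]; exact hzero _ (h' _)
    · have : (0 : ℝ) ≤ ((i / 2 : ℕ) : ℝ) * M := by positivity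
      by_cases hi : Even i
      · simp only [hi, if_true]; linarith
      · simp only [hi, if_false]; linarith
    · rcases Nat.even_or_odd' i with ⟨t, rfl | rfl⟩
      · have h2 : (2 * t) / 2 = t := by omega
        simp only [even_two_mul, if_true, h2]
        push_cast; linarith
      · have h1 : (2 * t + 1) / 2 = t := by omega
        simp only [even_two_mul, Nat.even_add_one, not_true, if_false, h1]
        push_cast; linarith
  obtain ⟨s, hs⟩ := manyZeros_descent hd hε0 hε hM ha k 1 hmany
  refine not_manyZeros_one hd hε0 hε hM ha s (fun j x hx => ?_) hs
  have hx' : x ∈ Set.Ioo (((j : ℤ) : ℝ) * M) ((((j : ℤ) : ℝ) + 1) * M) := by simpa using hx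
  constructor
  · rw [zak_expKer_eq hd0 hM hz c j hx']
    exact mul_ne_zero (by positivity) (hc j)
  · have hev : zak a M (expKer (d 0)) =ᶠ[nhds x] fun y => (d 0)⁻¹ * Real.exp (-(y / d 0)) *
        (c * ((z * (q : ℂ)) ^ (-(j : ℤ)) * (1 - z * (q : ℂ))⁻¹)).re := by
      filter_upwards [Ioo_mem_nhds hx'.1 hx'.2] with y hy
      exact zak_expKer_eq hd0 hM hz c j hy
    refine ContinuousAt.congr ?_ hev.symm
    fun_prop

/-! ### Frame bounds from non-vanishing symbols -/

/-- Convolution with an absolutely summable sequence is bounded below on `ℓ²(ℤ)` when its symbol has no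
zero on the unit circle: under the Fourier isometry it is multiplication by the conjugate symbol,
whose modulus has a positive minimum by compactness. -/
lemma convolution_frame_bounds (a : ℤ → ℂ) (ha : Summable fun n => ‖a n‖)
    (hne : ∀ z : ℂ, ‖z‖ = 1 → ∑' n : ℤ, a n * z ^ n ≠ 0) :
    ∃ A B : ℝ, 0 < A ∧ 0 < B ∧ ∀ f : ℤ → ℂ, Summable (fun n => ‖f n‖ ^ 2) →
      Summable (fun k : ℤ => ‖∑' n : ℤ, f n * star (a (n - k))‖ ^ 2) ∧
      A * ∑' n, ‖f n‖ ^ 2 ≤ ∑' k : ℤ, ‖∑' n : ℤ, f n * star (a (n - k))‖ ^ 2 ∧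
      ∑' k : ℤ, ‖∑' n : ℤ, f n * star (a (n - k))‖ ^ 2 ≤ B * ∑' n, ‖f n‖ ^ 2 := by
  have hsumC : Summable fun n : ℤ => a n • (fourier n : C(UnitAddCircle, ℂ)) := by
    refine Summable.of_norm (ha.congr fun n => ?_)
    rw [norm_smul, fourier_norm, mul_one]
  set S : C(UnitAddCircle, ℂ) := ∑' n : ℤ, a n • (fourier n : C(UnitAddCircle, ℂ)) with hS
  have hSt : ∀ t, HasSum (fun n : ℤ => a n * fourier n t) (S t) := fun t => by
    simpa using (ContinuousMap.evalCLM ℂ t).hasSum hsumC.hasSum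
  have hS0 : ∀ t, S t ≠ 0 := fun t => by
    rw [← (hSt t).tsum_eq]
    have := hne ((AddCircle.toCircle t : Circle) : ℂ) (Circle.norm_coe _)
    simpa [fourier_apply, AddCircle.toCircle_zsmul] using this
  obtain ⟨t₀, ht₀⟩ : ∃ t₀, ∀ t, ‖S t₀‖ ≤ ‖S t‖ := by
    obtain ⟨t₀, -, h⟩ := isCompact_univ.exists_isMinOn (Set.univ_nonempty (α := UnitAddCircle))
      (S.continuous.norm.continuousOn)
    exact ⟨t₀, fun t => h (Set.mem_univ t)⟩
  refine ⟨‖S t₀‖ ^ 2, ‖S‖ ^ 2, by have := norm_pos_iff.2 (hS0 t₀); positivity, ?_, fun f hf => ?_⟩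
  · have h1 := norm_pos_iff.2 (hS0 t₀)
    have h2 := S.norm_coe_le_norm t₀
    have : 0 < ‖S‖ := h1.trans_le h2
    positivity
  have hfm : Memℓp f 2 := memℓp_gen (by simpa using hf)
  set F : Lp ℂ 2 (@AddCircle.haarAddCircle (1 : ℝ) _) :=
    (fourierBasis (T := 1)).repr.symm ⟨f, hfm⟩ with hF
  have hcoef : ∀ n, fourierCoeff F n = f n := fun n => by
    rw [← fourierBasis_repr, hF, LinearIsometryEquiv.apply_symm_apply]
  have hFm : MemLp (F : UnitAddCircle → ℂ) 2 AddCircle.haarAddCircle := Lp.memLp F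
  have hFint : Integrable (F : UnitAddCircle → ℂ) AddCircle.haarAddCircle :=
    hFm.integrable (by norm_num)
  have hGm : MemLp (fun t => star (S t) * F t) 2 (@AddCircle.haarAddCircle (1 : ℝ) _) := by
    refine MemLp.of_le_mul (c := ‖S‖) hFm ?_ (Filter.Eventually.of_forall fun t => ?_)
    · exact (Continuous.aestronglyMeasurable (by fun_prop)).mul hFm.1
    · rw [norm_mul, norm_star]
      gcongr
      exact S.norm_coe_le_norm t
  have hfn : ∀ (k : ℤ) (t : UnitAddCircle), ‖fourier k t‖ = 1 := fun k t => by
    rw [fourier_apply]; exact Circle.norm_coe _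
  have hGcoef : ∀ k, fourierCoeff (hGm.toLp _) k = ∑' n : ℤ, f n * star (a (n - k)) := by
    intro k
    rw [fourierCoeff_congr_ae hGm.coeFn_toLp]
    have hInt : ∀ n : ℤ, Integrable (fun t : UnitAddCircle =>
        fourier (-k) t • ((star (a n) * fourier (-n) t) * F t)) AddCircle.haarAddCircle := by
      intro n
      refine hFint.norm.const_mul ‖a n‖ |>.mono' ?_ (Filter.Eventually.of_forall fun t => ?_)
      · simp only [smul_eq_mul]
        exact (fourier (-k)).continuous.aestronglyMeasurable.mul
          ((continuous_const.mul (fourier (-n)).continuous).aestronglyMeasurable.mul hFm.1)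
      · rw [norm_smul, norm_mul, norm_mul, hfn, hfn, norm_star, one_mul, mul_one]
    have h1 := integral_tsum_of_summable_integral_norm hInt (by
      refine (ha.mul_right (∫ t, ‖F t‖ ∂AddCircle.haarAddCircle)).congr fun n => ?_
      rw [← integral_const_mul]
      congr 1; funext t
      rw [norm_smul, norm_mul, norm_mul, hfn, hfn, norm_star, one_mul, mul_one])
    have h2 : fourierCoeff (fun t => star (S t) * F t) k = ∫ t : UnitAddCircle, ∑' n : ℤ,
        fourier (-k) t • ((star (a n) * fourier (-n) t) * F t) ∂AddCircle.haarAddCircle := by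
      unfold fourierCoeff
      congr 1; funext t
      have h3 := ((hSt t).star.mul_right (F t)).mul_left (fourier (-k) t)
      rw [smul_eq_mul, ← h3.tsum_eq]
      congr 1; funext n
      rw [smul_eq_mul, star_mul', @_root_.fourier_neg _ n t]
      rfl
    rw [h2, ← h1, ← (Equiv.subRight k).tsum_eq]
    congr 1; funext n
    rw [← hcoef n]
    unfold fourierCoeff
    rw [mul_comm, ← integral_const_mul]
    congr 1; funext t
    simp only [Equiv.subRight_apply, smul_eq_mul]
    rw [show -n = -k + -(n - k) by ring, _root_.fourier_add]
    ring
  have hP1 := hasSum_sq_fourierCoeff (hGm.toLp _)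
  have hP2 := hasSum_sq_fourierCoeff F
  simp_rw [hGcoef] at hP1
  simp_rw [hcoef] at hP2
  have hP3 : ∫ t, ‖hGm.toLp _ t‖ ^ 2 ∂(@AddCircle.haarAddCircle (1 : ℝ) _) =
      ∫ t, ‖S t‖ ^ 2 * ‖F t‖ ^ 2 ∂(@AddCircle.haarAddCircle (1 : ℝ) _) := by
    refine integral_congr_ae ?_
    filter_upwards [hGm.coeFn_toLp] with t ht
    rw [ht, norm_mul, norm_star, mul_pow]
  have hi1 : Integrable (fun t => ‖F t‖ ^ 2) (@AddCircle.haarAddCircle (1 : ℝ) _) :=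
    (memLp_two_iff_integrable_sq_norm hFm.1).1 hFm
  have hi2 : Integrable (fun t => ‖S t‖ ^ 2 * ‖F t‖ ^ 2) (@AddCircle.haarAddCircle (1 : ℝ) _) := by
    have := (memLp_two_iff_integrable_sq_norm hGm.1).1 hGm
    simpa [mul_pow] using this
  refine ⟨hP1.summable, ?_, ?_⟩
  · rw [hP1.tsum_eq, hP2.tsum_eq, hP3, ← integral_const_mul]
    refine integral_mono (hi1.const_mul _) hi2 fun t => ?_
    simp only
    gcongr
    exact ht₀ t
  · rw [hP1.tsum_eq, hP2.tsum_eq, hP3, ← integral_const_mul]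
    refine integral_mono hi2 (hi1.const_mul _) fun t => ?_
    simp only
    gcongr
    exact S.norm_coe_le_norm t

/-- Parseval's identity on `ℤ/Mℤ`. -/
lemma finite_parseval {M : ℕ} (hM : 0 < M) (c : Fin M → ℂ) :
    ∑ l ∈ Finset.range M, ‖∑ r : Fin M, c r *
      star (Complex.exp (2 * (Real.pi : ℂ) * Complex.I * (l : ℂ) * ((r : ℕ) : ℂ) / (M : ℂ)))‖ ^ 2 =
      M * ∑ r, ‖c r‖ ^ 2 := by
  have hM0 : (M : ℂ) ≠ 0 := by exact_mod_cast hM.ne'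
  set ζ : ℂ := Complex.exp (2 * (Real.pi : ℂ) * Complex.I / M) with hζ
  have hprim : IsPrimitiveRoot ζ M := Complex.isPrimitiveRoot_exp M hM.ne'
  have hζ0 : ζ ≠ 0 := Complex.exp_ne_zero _
  have hζn : ‖ζ‖ = 1 := hprim.norm'_eq_one hM.ne'
  have hstar : star ζ = ζ⁻¹ := (Complex.inv_eq_conj hζn).symm
  have he : ∀ (l : ℕ) (r : Fin M), star (Complex.exp (2 * (Real.pi : ℂ) * Complex.I * (l : ℂ) *
      ((r : ℕ) : ℂ) / (M : ℂ))) = (ζ⁻¹ ^ (r : ℕ)) ^ l := by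
    intro l r
    rw [← hstar, ← star_pow, ← star_pow, hζ, ← Complex.exp_nat_mul, ← Complex.exp_nat_mul]
    congr 2; ring
  have horth : ∀ r s : Fin M, ∑ l ∈ Finset.range M, (ζ⁻¹ ^ (r : ℕ)) ^ l * (ζ ^ (s : ℕ)) ^ l =
      if r = s then (M : ℂ) else 0 := by
    intro r s
    simp_rw [← mul_pow]
    split_ifs with h
    · subst h
      simp [inv_pow, inv_mul_cancel₀ (pow_ne_zero _ hζ0)]
    · have h1 : ζ⁻¹ ^ (r : ℕ) * ζ ^ (s : ℕ) ≠ 1 := by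
        intro hcon
        apply h
        rw [inv_pow, inv_mul_eq_one₀ (pow_ne_zero _ hζ0)] at hcon
        exact Fin.ext (hprim.pow_inj r.2 s.2 hcon)
      have h2 : (ζ⁻¹ ^ (r : ℕ) * ζ ^ (s : ℕ)) ^ M = 1 := by
        rw [mul_pow, pow_right_comm, pow_right_comm ζ, inv_pow, hprim.pow_eq_one]
        simp
      rw [geom_sum_eq h1, h2]; simp
  have hsq : ∀ w : ℂ, ((‖w‖ ^ 2 : ℝ) : ℂ) = w * star w := fun w => by
    rw [Complex.star_def, Complex.mul_conj, Complex.normSq_eq_norm_sq]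
  apply Complex.ofReal_injective
  simp_rw [he]
  rw [Complex.ofReal_sum, Complex.ofReal_mul, Complex.ofReal_sum]
  simp_rw [hsq, star_sum, star_mul', star_pow, star_inv₀, hstar, inv_inv, Finset.sum_mul_sum]
  rw [Finset.sum_comm, Finset.mul_sum]
  refine Finset.sum_congr rfl fun r _ => ?_
  rw [Finset.sum_comm]
  have : ∀ s : Fin M, ∑ l ∈ Finset.range M,
      c r * (ζ⁻¹ ^ (r : ℕ)) ^ l * (star (c s) * (ζ ^ (s : ℕ)) ^ l) =
      if r = s then (M : ℂ) * (c r * star (c s)) else 0 := by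
    intro s
    have h := horth r s
    calc _ = (c r * star (c s)) * ∑ l ∈ Finset.range M, (ζ⁻¹ ^ (r : ℕ)) ^ l * (ζ ^ (s : ℕ)) ^ l := by
          rw [Finset.mul_sum]; exact Finset.sum_congr rfl fun l _ => by ring
      _ = _ := by rw [h]; split_ifs <;> ring
  simp_rw [this]
  simp

lemma tsum_int_residues {M : ℕ} [NeZero M] {E : Type*} [NormedAddCommGroup E] [CompleteSpace E]
    {h : ℤ → E} (hh : Summable h) :
    ∑' j, h j = ∑ r : Fin M, ∑' n : ℤ, h (n * M + (r : ℕ)) := by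
  rw [← (Int.divModEquiv M).symm.tsum_eq, ← (Equiv.prodComm (Fin M) ℤ).tsum_eq]
  have h1 : Summable fun p : Fin M × ℤ =>
      h ((Int.divModEquiv M).symm (Equiv.prodComm (Fin M) ℤ p)) :=
    hh.comp_injective ((Int.divModEquiv M).symm.injective.comp (Equiv.prodComm (Fin M) ℤ).injective)
  rw [h1.tsum_prod, tsum_fintype]
  rfl

lemma summable_residue {M : ℕ} (hM : 0 < M) {E : Type*} [NormedAddCommGroup E] [CompleteSpace E]
    {h : ℤ → E} (hh : Summable h) (r : ℤ) : Summable fun n : ℤ => h (n * M + r) := by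
  refine hh.comp_injective fun a b hab => ?_
  simpa [hM.ne'] using hab

/-- At critical density the modulations only see the residue of `j` modulo `M`, so the Gabor coefficients
are discrete Fourier transforms of the convolutions on the cosets `r + Mℤ`. -/
lemma gaborCoefZ_eq {M : ℕ} [NeZero M] (hM : 0 < M) (g f : ℤ → ℂ) (hg : Summable fun j => ‖g j‖)
    (hf : Summable fun j => ‖f j‖ ^ 2) (k : ℤ) (l : ℕ) :
    gaborCoefZ g M M f k l = ∑ r : Fin M,
      (∑' n : ℤ, f (n * M + (r : ℕ)) * star (g ((n - k) * M + (r : ℕ)))) *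
      star (Complex.exp (2 * (Real.pi : ℂ) * Complex.I * (l : ℂ) * ((r : ℕ) : ℂ) / (M : ℂ))) := by
  have hM0 : (M : ℂ) ≠ 0 := by exact_mod_cast hM.ne'
  obtain ⟨C, hbd⟩ : ∃ C, ∀ j, ‖f j‖ ≤ C := ⟨Real.sqrt (∑' j, ‖f j‖ ^ 2), fun j =>
    Real.le_sqrt_of_sq_le (hf.le_tsum j fun i _ => by positivity)⟩
  have hexp : ∀ j : ℤ,
      ‖Complex.exp (2 * (Real.pi : ℂ) * Complex.I * (l : ℂ) * (j : ℂ) / (M : ℂ))‖ = 1 := by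
    intro j
    rw [show 2 * (Real.pi : ℂ) * Complex.I * (l : ℂ) * (j : ℂ) / (M : ℂ) =
      ((2 * Real.pi * l * j / M : ℝ) : ℂ) * I by push_cast; ring]
    exact Complex.norm_exp_ofReal_mul_I _
  have hg' : Summable fun j : ℤ => ‖g (j - k * (M : ℤ))‖ :=
    hg.comp_injective (i := fun j : ℤ => j - k * (M : ℤ)) sub_left_injective
  have hs : Summable fun j : ℤ => f j * star (g (j - k * (M : ℤ)) *
      Complex.exp (2 * (Real.pi : ℂ) * Complex.I * (l : ℂ) * (j : ℂ) / (M : ℂ))) := by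
    have hg'' : Summable fun j : ℤ => C * ‖g (j - k * (M : ℤ))‖ := hg'.mul_left C
    refine Summable.of_norm_bounded hg'' fun j => ?_
    rw [norm_mul, norm_star, norm_mul, hexp, mul_one]
    gcongr
    exact hbd j
  unfold gaborCoefZ
  rw [tsum_int_residues (M := M) hs]
  refine Finset.sum_congr rfl fun r _ => ?_
  rw [← tsum_mul_right]
  congr 1; funext n
  have h1 : Complex.exp (2 * (Real.pi : ℂ) * Complex.I * (l : ℂ) *
      ((n * (M : ℤ) + ((r : ℕ) : ℤ) : ℤ) : ℂ) / (M : ℂ)) =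
      Complex.exp (2 * (Real.pi : ℂ) * Complex.I * (l : ℂ) * ((r : ℕ) : ℂ) / (M : ℂ)) := by
    rw [Complex.exp_eq_exp_iff_exists_int]
    refine ⟨l * n, ?_⟩
    push_cast
    field_simp
    ring
  rw [h1, star_mul', show n * (M : ℤ) + ((r : ℕ) : ℤ) - k * M = (n - k) * M + ((r : ℕ) : ℤ) by ring]
  ring

/-- The Gabor family splits into `M` independent convolutions, one per coset `r + Mℤ`, so it is a frame
once none of the `M` coset symbols vanishes on the unit circle. -/
theorem gabor_frame_of_symbols {M : ℕ} (hM : 0 < M) (g : ℤ → ℂ) (hg : Summable fun j => ‖g j‖)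
    (hne : ∀ r : ℕ, r < M → ∀ z : ℂ, ‖z‖ = 1 → ∑' n : ℤ, g (n * M + r) * z ^ n ≠ 0) :
    ∃ A B : ℝ, 0 < A ∧ 0 < B ∧ ∀ f : ℤ → ℂ, Summable (fun j : ℤ => ‖f j‖ ^ 2) →
      A * (∑' j : ℤ, ‖f j‖ ^ 2) ≤
          (∑' k : ℤ, ∑ l ∈ Finset.range M, ‖gaborCoefZ g M M f k l‖ ^ 2) ∧
        (∑' k : ℤ, ∑ l ∈ Finset.range M, ‖gaborCoefZ g M M f k l‖ ^ 2) ≤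
          B * (∑' j : ℤ, ‖f j‖ ^ 2) := by
  have : NeZero M := ⟨hM.ne'⟩
  have hM' : (0 : ℝ) < M := by exact_mod_cast hM
  choose A B hA hB hAB using fun r : Fin M => convolution_frame_bounds
    (fun n => g (n * M + ((r : ℕ) : ℤ))) (summable_residue hM hg _) (hne r r.2)
  obtain ⟨r₀, -, hr₀⟩ := Finset.exists_min_image Finset.univ A
    ⟨(0 : Fin M), Finset.mem_univ _⟩
  obtain ⟨r₁, -, hr₁⟩ := Finset.exists_max_image Finset.univ B
    ⟨(0 : Fin M), Finset.mem_univ _⟩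
  refine ⟨M * A r₀, M * B r₁, mul_pos hM' (hA _), mul_pos hM' (hB _), fun f hf => ?_⟩
  have hfr : ∀ r : Fin M, Summable fun n : ℤ => ‖f (n * M + ((r : ℕ) : ℤ))‖ ^ 2 := fun r =>
    summable_residue (h := fun j => ‖f j‖ ^ 2) hM hf _
  have h1 : (∑' k : ℤ, ∑ l ∈ Finset.range M, ‖gaborCoefZ g M M f k l‖ ^ 2) =
      M * ∑ r : Fin M, ∑' k : ℤ, ‖∑' n : ℤ, f (n * M + ((r : ℕ) : ℤ)) *
        star (g ((n - k) * M + ((r : ℕ) : ℤ)))‖ ^ 2 := by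
    simp_rw [gaborCoefZ_eq hM g f hg hf, finite_parseval hM]
    rw [tsum_mul_left, Summable.tsum_finsetSum]
    exact fun r _ => (hAB r _ (hfr r)).1
  rw [h1, tsum_int_residues (M := M) hf, mul_assoc, mul_assoc]
  constructor
  · refine mul_le_mul_of_nonneg_left ?_ hM'.le
    rw [Finset.mul_sum]
    refine Finset.sum_le_sum fun r _ => le_trans ?_ (hAB r _ (hfr r)).2.1
    exact mul_le_mul_of_nonneg_right (hr₀ r (Finset.mem_univ _))
      (tsum_nonneg fun n => by positivity)
  · refine mul_le_mul_of_nonneg_left ?_ hM'.le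
    rw [Finset.mul_sum]
    refine Finset.sum_le_sum fun r _ => (hAB r _ (hfr r)).2.2.trans ?_
    exact mul_le_mul_of_nonneg_right (hr₁ r (Finset.mem_univ _))
      (tsum_nonneg fun n => by positivity)

/-! ### The symbol at the origin -/

lemma isBigO_rpow_neg_two {F : ℝ → ℂ} {C : ℝ} (hF : ∀ x, ‖F x‖ ≤ C * (1 + x ^ 2)⁻¹) :
    F =O[Filter.cocompact ℝ] fun x : ℝ => |x| ^ (-2 : ℝ) := by
  have hC : 0 ≤ C := by
    have := (norm_nonneg _).trans (hF 0)
    simpa using this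
  have hne : ∀ᶠ x : ℝ in Filter.cocompact ℝ, x ≠ 0 := by
    have := (isCompact_singleton (x := (0 : ℝ))).compl_mem_cocompact
    filter_upwards [this] with x hx using hx
  refine Asymptotics.IsBigO.of_bound C ?_
  filter_upwards [hne] with x hx
  refine (hF x).trans ?_
  have h1 : |x| ^ (-2 : ℝ) = (x ^ 2)⁻¹ := by
    rw [Real.rpow_neg (abs_nonneg _), Real.rpow_two, sq_abs]
  rw [h1, Real.norm_of_nonneg (by positivity)]
  have : 0 < x ^ 2 := by positivity
  gcongr
  linarith

/-- By Poisson summation the symbol of the coset `Mℤ` is a periodization of `𝓕 g`, hence positive when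
`𝓕 g` is. -/
theorem symbol_zero_ne {g : ℝ → ℂ} (hgc : Continuous g) {C C' : ℝ}
    (hgC : ∀ x, ‖g x‖ ≤ C * (1 + x ^ 2)⁻¹) {Q : ℝ → ℝ} (hQ : ∀ ξ, 𝓕 g ξ = Q ξ)
    (hQ0 : ∀ ξ, 0 < Q ξ) (hQC : ∀ ξ, Q ξ ≤ C' * (1 + ξ ^ 2)⁻¹) {M : ℕ} (hM : 0 < M)
    {z : ℂ} (hz : ‖z‖ = 1) : ∑' n : ℤ, g (n * M) * z ^ n ≠ 0 := by
  have hM' : (1 : ℝ) ≤ M := by exact_mod_cast hM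
  have hM0 : (M : ℝ) ≠ 0 := by positivity
  have hC : 0 ≤ C := by
    have := (norm_nonneg _).trans (hgC 0)
    simpa using this
  have hC' : 0 ≤ C' := by
    have := (hQ0 0).le.trans (hQC 0)
    simpa using this
  obtain ⟨θ, rfl⟩ := (Complex.norm_eq_one_iff z).1 hz
  set t : ℝ := θ / (2 * Real.pi) with ht
  set f : ℝ → ℂ := fun x => g (M * x) * Complex.exp ((θ * x : ℝ) * I) with hf
  have hfF : ∀ ξ : ℝ, 𝓕 f ξ = (((M : ℝ)⁻¹ * Q ((ξ - t) / M) : ℝ) : ℂ) := by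
    intro ξ
    rw [Complex.ofReal_mul, ← hQ, Real.fourier_real_eq_integral_exp_smul,
      Real.fourier_real_eq_integral_exp_smul]
    have h := Measure.integral_comp_mul_left
      (fun y : ℝ => Complex.exp (↑(-2 * Real.pi * y * ((ξ - t) / M)) * I) • g y) (M : ℝ)
    rw [abs_of_pos (by positivity), Complex.real_smul] at h
    rw [← h]
    congr 1; funext x
    simp only [hf, smul_eq_mul]
    rw [mul_comm (g _), ← mul_assoc, ← Complex.exp_add, ← add_mul, ← Complex.ofReal_add]
    congr 5
    rw [ht]
    field_simp
    ring
  have hfb : ∀ x, ‖f x‖ ≤ C * (1 + x ^ 2)⁻¹ := by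
    intro x
    simp only [hf]
    rw [norm_mul, Complex.norm_exp_ofReal_mul_I, mul_one]
    refine (hgC _).trans ?_
    have h1 : x ^ 2 ≤ (M * x) ^ 2 := by
      rw [mul_pow]
      exact le_mul_of_one_le_left (sq_nonneg x) (one_le_pow₀ hM')
    gcongr C * (1 + ?_)⁻¹
  have hFb : ∀ ξ, ‖𝓕 f ξ‖ ≤ (C' * (1 + 2 * M ^ 2 + 2 * t ^ 2)) * (1 + ξ ^ 2)⁻¹ := by
    intro ξ
    rw [hfF, Complex.norm_real, Real.norm_of_nonneg (mul_pos (by positivity) (hQ0 _)).le]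
    have h1 : (M : ℝ)⁻¹ ≤ 1 := inv_le_one_of_one_le₀ hM'
    have h2 : (1 + ((ξ - t) / M) ^ 2)⁻¹ ≤ (1 + 2 * M ^ 2 + 2 * t ^ 2) * (1 + ξ ^ 2)⁻¹ := by
      rw [← div_eq_mul_inv, inv_eq_one_div, div_le_div_iff₀ (by positivity) (by positivity)]
      set u := (ξ - t) / M with hu
      have hξ : ξ = M * u + t := by rw [hu]; field_simp; ring
      rw [hξ]
      nlinarith [sq_nonneg (M * u - t), sq_nonneg u, sq_nonneg t, sq_nonneg (M : ℝ),
        mul_nonneg (sq_nonneg t) (sq_nonneg u)]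
    calc (M : ℝ)⁻¹ * Q ((ξ - t) / M) ≤ 1 * (C' * (1 + ((ξ - t) / M) ^ 2)⁻¹) := by
          gcongr
          · exact (hQ0 _).le
          · exact hQC _
      _ ≤ 1 * (C' * ((1 + 2 * M ^ 2 + 2 * t ^ 2) * (1 + ξ ^ 2)⁻¹)) := by gcongr
      _ = _ := by ring
  have hO := isBigO_rpow_neg_two hFb
  have hP := Real.tsum_eq_tsum_fourier_of_rpow_decay (f := f) (by fun_prop) one_lt_two
    (isBigO_rpow_neg_two hfb) hO 0
  have hsum : Summable fun n : ℤ => 𝓕 f n :=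
    summable_of_isBigO (Real.summable_abs_int_rpow one_lt_two)
      (hO.comp_tendsto Int.tendsto_coe_cofinite)
  have hsumR : Summable fun n : ℤ => (M : ℝ)⁻¹ * Q (((n : ℝ) - t) / M) := by
    simp_rw [hfF] at hsum
    exact Complex.summable_ofReal.1 hsum
  have hpos : 0 < ∑' n : ℤ, (M : ℝ)⁻¹ * Q (((n : ℝ) - t) / M) :=
    hsumR.tsum_pos (fun n => (mul_pos (by positivity) (hQ0 _)).le) 0
      (mul_pos (by positivity) (hQ0 _))
  have h1 : ∑' n : ℤ, g (n * M) * (Complex.exp (θ * I)) ^ n = ∑' n : ℤ, f (0 + n) := by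
    congr 1; funext n
    simp only [hf, zero_add]
    rw [← Complex.exp_int_mul, mul_comm (n : ℝ)]
    congr 2
    push_cast; ring
  have h2 : ∑' n : ℤ, 𝓕 f n * fourier n ((0 : ℝ) : UnitAddCircle) =
      ((∑' n : ℤ, (M : ℝ)⁻¹ * Q (((n : ℝ) - t) / M) : ℝ) : ℂ) := by
    rw [Complex.ofReal_tsum]
    congr 1; funext n
    rw [hfF]
    simp
  rw [h1, hP, h2]
  exact_mod_cast (ne_of_gt hpos)

/-! ### The Fourier transform of an even totally positive function -/

lemma norm_factor_sq (δ ξ : ℝ) :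
    ‖(1 + 2 * (Real.pi : ℂ) * Complex.I * (δ : ℂ) * (ξ : ℂ))⁻¹‖ ^ 2 =
      (1 + (2 * Real.pi * δ * ξ) ^ 2)⁻¹ := by
  rw [norm_inv, inv_pow, ← Complex.normSq_eq_norm_sq]
  congr 1
  rw [show 1 + 2 * (Real.pi : ℂ) * Complex.I * (δ : ℂ) * (ξ : ℂ) =
    ((1 : ℝ) : ℂ) + ((2 * Real.pi * δ * ξ : ℝ) : ℂ) * I by push_cast; ring]
  rw [Complex.normSq_add_mul_I]
  ring

lemma factor_ne_zero (δ ξ : ℝ) :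
    (1 + 2 * (Real.pi : ℂ) * Complex.I * (δ : ℂ) * (ξ : ℂ))⁻¹ ≠ 0 := by
  have h := norm_factor_sq δ ξ
  intro h0
  rw [h0] at h
  have : (0 : ℝ) < (1 + (2 * Real.pi * δ * ξ) ^ 2)⁻¹ := by positivity
  simp at h
  nlinarith [sq_nonneg (2 * Real.pi * δ * ξ)]

lemma norm_factor_le_one (δ ξ : ℝ) :
    ‖(1 + 2 * (Real.pi : ℂ) * Complex.I * (δ : ℂ) * (ξ : ℂ))⁻¹‖ ≤ 1 := by
  have h : ‖(1 + 2 * (Real.pi : ℂ) * Complex.I * (δ : ℂ) * (ξ : ℂ))⁻¹‖ ^ 2 ≤ 1 := by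
    rw [norm_factor_sq]
    exact inv_le_one_of_one_le₀ (by nlinarith [sq_nonneg (2 * Real.pi * δ * ξ)])
  exact (sq_le_one_iff₀ (norm_nonneg _)).1 h

lemma norm_factor_sq_le {δ : ℝ} (hδ : δ ≠ 0) (ξ : ℝ) :
    ‖(1 + 2 * (Real.pi : ℂ) * Complex.I * (δ : ℂ) * (ξ : ℂ))⁻¹‖ ^ 2 ≤
      (1 + ((2 * Real.pi * δ) ^ 2)⁻¹) * (1 + ξ ^ 2)⁻¹ := by
  rw [norm_factor_sq, ← div_eq_mul_inv, inv_eq_one_div,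
    div_le_div_iff₀ (by positivity) (by positivity)]
  have h0 : 0 < (2 * Real.pi * δ) ^ 2 := by
    have := Real.pi_pos
    positivity
  set u := (2 * Real.pi * δ) ^ 2
  rw [mul_pow]
  have : (1 + u⁻¹) * (1 + u * ξ ^ 2) = 1 + ξ ^ 2 + (u⁻¹ + u * ξ ^ 2) := by field_simp; ring
  rw [this]
  have : 0 ≤ u⁻¹ + u * ξ ^ 2 := by positivity
  linarith

lemma exists_prod_bound {d : ℕ → ℝ} (hd : ∀ i, d i ≠ 0) (k : ℕ) : ∃ C : ℝ, ∀ ξ : ℝ,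
    ‖∏ i ∈ Finset.range (k + 2), (1 + 2 * (Real.pi : ℂ) * Complex.I * (d i : ℂ) * (ξ : ℂ))⁻¹‖ ≤
      C * (1 + ξ ^ 2)⁻¹ := by
  induction k with
  | zero =>
    refine ⟨((1 + ((2 * Real.pi * d 0) ^ 2)⁻¹) + (1 + ((2 * Real.pi * d 1) ^ 2)⁻¹)) / 2,
      fun ξ => ?_⟩
    rw [Finset.prod_range_succ, Finset.prod_range_one, norm_mul]
    have h0 := norm_factor_sq_le (hd 0) ξ
    have h1 := norm_factor_sq_le (hd 1) ξ
    nlinarith [two_mul_le_add_sq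
      ‖(1 + 2 * (Real.pi : ℂ) * Complex.I * (d 0 : ℂ) * (ξ : ℂ))⁻¹‖
      ‖(1 + 2 * (Real.pi : ℂ) * Complex.I * (d 1 : ℂ) * (ξ : ℂ))⁻¹‖]
  | succ k ih =>
    obtain ⟨C, hC⟩ := ih
    refine ⟨C, fun ξ => ?_⟩
    rw [Finset.prod_range_succ, norm_mul]
    exact (mul_le_of_le_one_right (norm_nonneg _) (norm_factor_le_one _ _)).trans (hC ξ)

lemma fourier_even {g : ℝ → ℂ} (heven : ∀ x, g (-x) = g x) (ξ : ℝ) : 𝓕 g (-ξ) = 𝓕 g ξ := by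
  rw [Real.fourier_real_eq_integral_exp_smul, Real.fourier_real_eq_integral_exp_smul,
    ← integral_neg_eq_self]
  congr 1; funext x
  rw [heven]
  congr 4
  ring

/-- The product formula makes the conjugate of `𝓕 g ξ` equal to `𝓕 g (-ξ)`, so evenness makes `𝓕 g` real. It
has no zeros and equals `1` at the origin, hence is positive by the intermediate value theorem. -/
lemma fourier_pos_of_even {g : ℝ → ℂ} {d : ℕ → ℝ} {k : ℕ}
    (hFT : ∀ ξ : ℝ, 𝓕 g ξ = ∏ i ∈ Finset.range k,
      (1 + 2 * (Real.pi : ℂ) * Complex.I * (d i : ℂ) * (ξ : ℂ))⁻¹)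
    (heven : ∀ x, g (-x) = g x) : ∀ ξ, 𝓕 g ξ = ((𝓕 g ξ).re : ℂ) ∧ 0 < (𝓕 g ξ).re := by
  have hreal : ∀ ξ, 𝓕 g ξ = ((𝓕 g ξ).re : ℂ) := by
    intro ξ
    symm
    rw [← Complex.conj_eq_iff_re]
    conv_rhs => rw [← fourier_even heven, hFT]
    rw [hFT, map_prod]
    refine Finset.prod_congr rfl fun i _ => ?_
    simp only [map_inv₀, map_add, map_one, map_mul, map_ofNat, Complex.conj_ofReal, Complex.conj_I,
      Complex.ofReal_neg, mul_neg, neg_mul]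
  have hne : ∀ ξ, (𝓕 g ξ).re ≠ 0 := by
    intro ξ h0
    have h1 := hreal ξ
    rw [h0, hFT, Complex.ofReal_zero, Finset.prod_eq_zero_iff] at h1
    obtain ⟨i, -, hi⟩ := h1
    exact factor_ne_zero _ _ hi
  have hcont : Continuous fun ξ => (𝓕 g ξ).re := by
    refine Complex.continuous_re.comp ?_
    rw [show 𝓕 g = fun ξ : ℝ => ∏ i ∈ Finset.range k,
      (1 + 2 * (Real.pi : ℂ) * Complex.I * (d i : ℂ) * (ξ : ℂ))⁻¹ from funext hFT]
    refine continuous_finsetProd _ fun i _ => Continuous.inv₀ (by fun_prop) fun ξ => ?_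
    exact fun h => factor_ne_zero _ _ (inv_eq_zero.2 h)
  have h0 : (𝓕 g 0).re = 1 := by rw [hFT]; simp
  refine fun ξ => ⟨hreal ξ, ?_⟩
  by_contra hneg
  obtain ⟨η, hη⟩ := mem_range_of_exists_le_of_exists_ge hcont
    ⟨ξ, not_lt.1 hneg⟩ ⟨0, by rw [h0]; exact zero_le_one⟩
  exact hne η hη

/-! ### Identification with the convolution chain -/

/-- Both sides are continuous with the same integrable Fourier transform. -/
lemma eq_tpChain {g : ℝ → ℂ} {d : ℕ → ℝ} {ε : ℝ} {k : ℕ} (hd : ∀ i, d i ≠ 0) (hε0 : 0 < ε)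
    (hε : ∀ i, ε * |d i| < 1) (hgcont : Continuous g) (hg : Integrable g)
    (hFT : ∀ ξ : ℝ, 𝓕 g ξ = ∏ i ∈ Finset.range (k + 2),
      (1 + 2 * (Real.pi : ℂ) * Complex.I * (d i : ℂ) * (ξ : ℂ))⁻¹) (x : ℝ) :
    g x = (tpChain d (k + 1) x : ℂ) := by
  obtain ⟨hm, C, hC⟩ := tpChain_measurable_decay hd hε0 hε (k + 1)
  obtain ⟨C', hC'⟩ := exists_prod_bound hd k
  have hF : 𝓕 g = 𝓕 (fun x : ℝ => (tpChain d (k + 1) x : ℂ)) :=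
    funext fun ξ => by rw [hFT, tpChain_fourier hd hε0 hε]
  have hc : Continuous fun x : ℝ => (tpChain d (k + 1) x : ℂ) :=
    Complex.continuous_ofReal.comp (tpChain_succ_continuous hd hε0 hε k)
  have hInt : Integrable (𝓕 g) := by
    refine (integrable_inv_one_add_sq.const_mul C').mono' ?_
      (Filter.Eventually.of_forall fun ξ => by rw [hFT]; exact hC' ξ)
    rw [show 𝓕 g = fun ξ : ℝ => ∏ i ∈ Finset.range (k + 2),
      (1 + 2 * (Real.pi : ℂ) * Complex.I * (d i : ℂ) * (ξ : ℂ))⁻¹ from funext hFT]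
    refine Continuous.aestronglyMeasurable ?_
    refine continuous_finsetProd _ fun i _ => Continuous.inv₀ (by fun_prop) fun ξ => ?_
    exact fun h => factor_ne_zero _ _ (inv_eq_zero.2 h)
  have h1 := hgcont.fourierInv_fourier_eq hg hInt
  have h2 := hc.fourierInv_fourier_eq (integrable_of_exp_decay hε0 hm hC).ofReal (hF ▸ hInt)
  rw [← hF, h1] at h2
  exact congrFun h2 x

/-- For a real even function, conjugation and `n ↦ -n` carry a zero of the Zak transform at `x` to one
at `-x` on the same fibre. -/
lemma symbol_reflect {G : ℝ → ℝ} (heven : ∀ x, G (-x) = G x) {M : ℕ} {z : ℂ} (hz : ‖z‖ = 1) {x : ℝ}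
    (h : ∑' n : ℤ, z ^ n * (G (x + n * M) : ℂ) = 0) :
    ∑' n : ℤ, z ^ n * (G (-x + n * M) : ℂ) = 0 := by
  rw [← (Equiv.neg ℤ).tsum_eq]
  have h1 := congrArg (starRingEnd ℂ) h
  rw [Complex.conj_tsum, map_zero] at h1
  rw [← h1]
  congr 1; funext n
  rw [map_mul, map_zpow₀, ← Complex.inv_eq_conj hz, Complex.conj_ofReal, Equiv.neg_apply, inv_zpow',
    ← heven]
  congr 3
  push_cast; ring

lemma symbol_shift {G : ℝ → ℝ} {M : ℕ} {z : ℂ} (hz : ‖z‖ = 1) {x : ℝ} (j : ℤ)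
    (h : ∑' n : ℤ, z ^ n * (G (x + n * M) : ℂ) = 0) :
    ∑' n : ℤ, z ^ n * (G (x + j * M + n * M) : ℂ) = 0 := by
  have hz0 : z ≠ 0 := norm_pos_iff.1 (by rw [hz]; exact one_pos)
  rw [← (Equiv.subRight j).tsum_eq]
  have : ∀ n : ℤ, z ^ (Equiv.subRight j n) *
      (G (x + j * M + ((Equiv.subRight j n : ℤ) : ℝ) * M) : ℂ) =
      z ^ (-j) * (z ^ n * (G (x + n * M) : ℂ)) := by
    intro n
    rw [Equiv.subRight_apply, ← mul_assoc, ← zpow_add₀ hz0, neg_add_eq_sub]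
    congr 3
    push_cast; ring
  simp_rw [this]
  rw [tsum_mul_left, h, mul_zero]

/-- For odd `M` and `0 < r < M` the point `r` is not congruent to `-r` modulo `M`, so a zero of
the symbol at `r` would produce two zero orbits, which total positivity excludes. -/
lemma symbol_ne_of_odd {d : ℕ → ℝ} {ε : ℝ} (hd : ∀ i, d i ≠ 0) (hd0 : 0 < d 0) (hε0 : 0 < ε)
    (hε : ∀ i, ε * |d i| < 1) {k : ℕ} (heven : ∀ x, tpChain d (k + 1) (-x) = tpChain d (k + 1) x)
    {M : ℕ} (hM : 0 < M) (hModd : Odd M) {r : ℕ} (hr0 : 0 < r) (hrM : r < M) {z : ℂ}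
    (hz : ‖z‖ = 1) : ∑' n : ℤ, z ^ n * (tpChain d (k + 1) (r + n * M) : ℂ) ≠ 0 := by
  intro h
  have hr := symbol_reflect heven hz h
  have hne : 2 * r ≠ M := fun h => by
    obtain ⟨s, hs⟩ := hModd
    omega
  have hcongr : ∀ {x y : ℝ}, x = y → ∑' n : ℤ, z ^ n * (tpChain d (k + 1) (x + n * M) : ℂ) = 0 →
      ∑' n : ℤ, z ^ n * (tpChain d (k + 1) (y + n * M) : ℂ) = 0 := fun h => h ▸ id
  rcases lt_or_gt_of_ne hne with hlt | hgt
  · have hlt' : (2 : ℝ) * r < M := by exact_mod_cast hlt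
    refine zak_tpChain_not_two_zeros hd hd0 hε0 hε hM hz k (p := r) (by exact_mod_cast hr0)
      (by linarith) (fun j => ?_) fun j => ?_
    · exact hcongr (by push_cast; ring) (symbol_shift hz j h)
    · exact hcongr (by push_cast; ring) (symbol_shift hz (j + 1) hr)
  · have hgt' : (M : ℝ) < 2 * r := by exact_mod_cast hgt
    have hrM' : (r : ℝ) < M := by exact_mod_cast hrM
    refine zak_tpChain_not_two_zeros hd hd0 hε0 hε hM hz k (p := M - r) (by linarith)
      (by linarith) (fun j => ?_) fun j => ?_
    · exact hcongr (by push_cast; ring) (symbol_shift hz (j + 1) hr)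
    · exact hcongr (by push_cast; ring) (symbol_shift hz j h)

lemma summable_norm_int_of_decay {G : ℝ → ℝ} {ε C : ℝ} (hε : 0 < ε)
    (hC : ∀ x, |G x| ≤ C * Real.exp (-(ε * |x|))) : Summable fun j : ℤ => ‖((G j : ℝ) : ℂ)‖ := by
  refine Summable.of_nonneg_of_le (fun _ => norm_nonneg _) (fun j => ?_)
    ((summable_exp_neg_int hε one_pos).mul_left C)
  rw [Complex.norm_real, Real.norm_eq_abs]
  simpa using hC j

theorem stmt13 (m : ℕ) (hm : 2 ≤ m) (δ : Fin m → ℝ) (hδ0 : ∀ i, δ i ≠ 0)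
    (g : ℝ → ℂ) (hgcont : Continuous g) (hg : Integrable g)
    (hFT : ∀ ξ : ℝ, 𝓕 g ξ =
      ∏ k : Fin m, (1 + 2 * (Real.pi : ℂ) * Complex.I * (δ k : ℂ) * (ξ : ℂ))⁻¹)
    (heven : ∀ x : ℝ, g (-x) = g x)
    (M : ℕ) (hM : 0 < M) (hModd : Odd M) :
    Summable (fun j : ℤ => ‖g (j : ℝ)‖ ^ 2) ∧
    ∃ A B : ℝ, 0 < A ∧ 0 < B ∧ ∀ f : ℤ → ℂ, Summable (fun j : ℤ => ‖f j‖ ^ 2) →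
      A * (∑' j : ℤ, ‖f j‖ ^ 2) ≤
          (∑' k : ℤ, ∑ l ∈ Finset.range M,
            ‖gaborCoefZ (fun j : ℤ => g (j : ℝ)) M M f k l‖ ^ 2) ∧
        (∑' k : ℤ, ∑ l ∈ Finset.range M,
            ‖gaborCoefZ (fun j : ℤ => g (j : ℝ)) M M f k l‖ ^ 2) ≤
          B * (∑' j : ℤ, ‖f j‖ ^ 2) := by
  obtain ⟨k, rfl⟩ : ∃ k, m = k + 2 := ⟨m - 2, by omega⟩
  -- Since `𝓕 g` is even, `δ` may be replaced by `-δ`; the sign `σ` makes the first parameter positive.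
  obtain ⟨σ, hσ, hσ0⟩ : ∃ σ : ℝ, (σ = 1 ∨ σ = -1) ∧ 0 < σ * δ 0 := by
    rcases lt_or_gt_of_ne (hδ0 0) with h | h
    · exact ⟨-1, Or.inr rfl, by linarith⟩
    · exact ⟨1, Or.inl rfl, by linarith⟩
  have hσa : |σ| = 1 := by rcases hσ with rfl | rfl <;> simp
  have hσn : σ ≠ 0 := by rcases hσ with rfl | rfl <;> norm_num
  obtain ⟨d, hdδ, hd1⟩ : ∃ d : ℕ → ℝ, (∀ i : Fin (k + 2), d i = σ * δ i) ∧
      ∀ i, k + 2 ≤ i → d i = 1 :=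
    ⟨fun i => if h : i < k + 2 then σ * δ ⟨i, h⟩ else 1, fun i => by simp,
      fun i hi => by simp [not_lt.2 hi]⟩
  have hd : ∀ i, d i ≠ 0 := fun i => by
    rcases lt_or_ge i (k + 2) with h | h
    · rw [show d i = _ from hdδ ⟨i, h⟩]
      exact mul_ne_zero hσn (hδ0 _)
    · rw [hd1 i h]; exact one_ne_zero
  have hd0 : 0 < d 0 := by rw [show d 0 = _ from hdδ 0]; exact hσ0
  have hFT' : ∀ ξ : ℝ, 𝓕 g ξ = ∏ i ∈ Finset.range (k + 2),
      (1 + 2 * (Real.pi : ℂ) * Complex.I * (d i : ℂ) * (ξ : ℂ))⁻¹ := by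
    intro ξ
    have h1 : 𝓕 g ξ = 𝓕 g (σ * ξ) := by
      rcases hσ with rfl | rfl
      · rw [one_mul]
      · rw [neg_one_mul, fourier_even heven]
    rw [h1, hFT, ← Fin.prod_univ_eq_prod_range
      (fun i => (1 + 2 * (Real.pi : ℂ) * Complex.I * (d i : ℂ) * (ξ : ℂ))⁻¹)]
    refine Finset.prod_congr rfl fun i _ => ?_
    rw [hdδ]
    push_cast
    ring
  -- A common exponential decay rate for all the one-sided exponentials.
  obtain ⟨ε, hε0, hε⟩ : ∃ ε : ℝ, 0 < ε ∧ ∀ i, ε * |d i| < 1 := by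
    have hS : 0 ≤ ∑ i, |δ i| := Finset.sum_nonneg fun i _ => abs_nonneg _
    refine ⟨(2 + ∑ i, |δ i|)⁻¹, by positivity, fun i => ?_⟩
    rw [inv_mul_lt_one₀ (by positivity)]
    rcases lt_or_ge i (k + 2) with h | h
    · rw [show d i = _ from hdδ ⟨i, h⟩, abs_mul, hσa, one_mul]
      have := Finset.single_le_sum (f := fun i => |δ i|) (fun i _ => abs_nonneg _)
        (Finset.mem_univ (⟨i, h⟩ : Fin (k + 2)))
      linarith
    · rw [hd1 i h, abs_one]; linarith
  have hgG := eq_tpChain hd hε0 hε hgcont hg hFT'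
  obtain ⟨-, C, hC⟩ := tpChain_measurable_decay hd hε0 hε (k + 1)
  have hC0 : 0 ≤ C := by
    have := (abs_nonneg _).trans (hC 0)
    simpa using this
  have hevenG : ∀ x, tpChain d (k + 1) (-x) = tpChain d (k + 1) x := fun x => by
    have := heven x
    rw [hgG, hgG] at this
    exact_mod_cast this
  have hsum : Summable fun j : ℤ => ‖g (j : ℝ)‖ := by
    simp_rw [hgG]
    exact summable_norm_int_of_decay hε0 hC
  refine ⟨?_, gabor_frame_of_symbols hM (fun j : ℤ => g (j : ℝ)) hsum fun r hr z hz => ?_⟩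
  -- Absolutely summable sequences are square summable.
  · refine Summable.of_norm_bounded_eventually hsum ?_
    have h1 : ∀ᶠ j : ℤ in Filter.cofinite, ‖g (j : ℝ)‖ < 1 :=
      hsum.tendsto_cofinite_zero.eventually_lt_const one_pos
    filter_upwards [h1] with j hj
    rw [Real.norm_of_nonneg (by positivity)]
    exact pow_le_of_le_one (norm_nonneg _) hj.le two_ne_zero
  rcases Nat.eq_zero_or_pos r with rfl | hr0
  · have hpos := fourier_pos_of_even hFT' heven
    obtain ⟨C', hC'⟩ := exists_prod_bound hd k
    have h := symbol_zero_ne (C := C * (1 + 2 / ε ^ 2)) (C' := C') hgcont (fun x => ?_)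
      (fun ξ => (hpos ξ).1) (fun ξ => (hpos ξ).2) (fun ξ => ?_) hM hz
    · simpa using h
    · rw [hgG, Complex.norm_real, Real.norm_eq_abs, mul_assoc]
      exact (hC x).trans (mul_le_mul_of_nonneg_left (exp_neg_abs_le hε0 x) hC0)
    · refine (Complex.re_le_norm _).trans ?_
      rw [hFT']
      exact hC' ξ
  · have h := symbol_ne_of_odd hd hd0 hε0 hε hevenG hM hModd hr0 hr hz
    refine fun h0 => h (h0 ▸ ?_)
    congr 1; funext n
    rw [hgG, mul_comm]
    congr 3
    push_cast; ring
end

section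
/- Let g ∈ L¹(ℝ) be a totally positive function of finite type m + n ≥ 2, identified with its continuous representative, whose parameters consist of m positive numbers and n negative numbers (m, n ∈ ℕ₀). Let α, β > 0 with αβ < 1, let x ∈ [0, α), L ∈ ℕ₀, and set r = ⌊1/(1 − αβ)⌋, k₁ = −(r+1)m − L, k₂ = (r+1)n + L, i₁ = ⌊(k₁ + m − 1)/(αβ) − x/α⌋ + 1, i₂ = ⌈(k₂ − n + 1)/(αβ) − x/α⌉ − 1. Then the matrix P = (g(x + αi − k/β)) with row indices i₁ ≤ i ≤ i₂ and column indices k₁ ≤ k ≤ k₂ has full column rank, i.e. rank(P) = k₂ − k₁ + 1. -/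
open MeasureTheory Complex FourierTransform

/-!
The proof rests on the Schoenberg–Whitney property of totally positive functions of finite type:
for strictly increasing `x` and `y` the determinant of `(G (x i - y j))` is nonnegative, and it is
positive as soon as `y (j - n) < x j < y (j + m)` for all indices that make sense (`Interlace`).

*Schoenberg–Whitney.* A function with the prescribed Fourier transform is obtained by successively
convolving one-sided exponentials `expKer δ` and their reflections (`exists_tp`). For one factor the
matrix is, up to row and column scalings and after subtracting consecutive rows, a 0-1 matrix whose
determinant is its diagonal product (`isTP_expKer`). If `F = f * expKer δ` with `δ > 0`, then
`exp (x / δ) * F (x - y)` is the integral of `w s * f (s - y)` over `s ≤ x`, with `w > 0`. Hence,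
subtracting consecutive rows, the determinant for `F` is a positive multiple of the integral of
`∏ w (ξ i) * det (f (ξ i - y j))` over the box `x (i - 1) < ξ i ≤ x i`. The integrand is nonnegative
by induction, and the interlacing condition for `F` guarantees that the box contains a nonempty open
set of `ξ` satisfying the interlacing condition for `f` (`IsTP.conv`). Negative parameters are
reduced to positive ones by reflection (`IsTP.comp_neg`).

*Identification.* A continuous integrable function is determined by its Fourier transform
(`eq_of_fourier_eq`), so `g` is the function just constructed.

*Selection of rows.* With `a = α β` and points `a i + β x` in place of `x + α i`, take for the `j`-th
row the larger of `i₁ + j` and the least index `i` with `a i + β x > k₁ + j - n`. The choice of `r`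
makes the number of rows large enough for these rows to be available, and since `a < 1` they
interlace with the nodes `k / β` (`exists_rows`). The corresponding square submatrix is invertible.
-/

namespace SchoenbergWhitney

/-! ### Interlacing and total positivity -/

/-- The Schoenberg–Whitney condition `y (j - n) < x j < y (j + m)`, required only for those indices
that lie in range. For increasing `x` and `y` the inequalities between indices may equivalently be
replaced by equalities. -/
def Interlace (m n : ℕ) {N : ℕ} (x y : Fin N → ℝ) : Prop :=
  (∀ i j : Fin N, (i : ℕ) + n ≤ j → y i < x j) ∧ ∀ i j : Fin N, (i : ℕ) + m ≤ j → x i < y j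

/-- `f` is totally positive with Schoenberg–Whitney exponents `(m, n)`: all determinants of
`(f (x i - y j))` with increasing nodes are nonnegative, and positive for interlacing nodes. -/
def IsTP (m n : ℕ) (f : ℝ → ℝ) : Prop :=
  ∀ (N : ℕ) (x y : Fin N → ℝ), StrictMono x → StrictMono y →
    0 ≤ (Matrix.of fun i j => f (x i - y j)).det ∧
    (Interlace m n x y → 0 < (Matrix.of fun i j => f (x i - y j)).det)

/-- The interval `(x (i - 1), x i]`, with `x (-1) = -∞`. -/
def cell {N : ℕ} (x : Fin N → ℝ) (i : Fin N) : Set ℝ := {s | s ≤ x i ∧ ∀ k < i, x k < s}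

/-- Subtracting consecutive rows: for additive set functions `A j`, the half-lines `(-∞, x i]` may
be replaced by the cells `(x (i - 1), x i]` without changing the determinant. -/
lemma det_cell {N : ℕ} {x : Fin N → ℝ} (hx : StrictMono x) (A : Fin N → Set ℝ → ℝ)
    (hA : ∀ j a b, a ≤ b → A j (Set.Iic b) = A j (Set.Iic a) + A j (Set.Ioc a b)) :
    (Matrix.of fun i j => A j (Set.Iic (x i))).det = (Matrix.of fun i j => A j (cell x i)).det := by
  cases N with
  | zero => simp
  | succ N =>
    refine Matrix.det_eq_of_forall_row_eq_smul_add_pred (fun _ => 1) (fun j => ?_) fun i j => ?_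
    · have : cell x 0 = Set.Iic (x 0) := by ext s; simp [cell]
      simp [this]
    · have : cell x i.succ = Set.Ioc (x i.castSucc) (x i.succ) := by
        ext s
        simp only [cell, Set.mem_ofPred_eq, Set.mem_Ioc]
        refine ⟨fun h => ⟨h.2 _ i.castSucc_lt_succ, h.1⟩, fun h => ⟨h.2, fun k hk => ?_⟩⟩
        exact (hx.monotone (Fin.le_castSucc_iff.2 hk)).trans_lt h.1
      simp only [Matrix.of_apply, this, one_mul]
      rw [hA j _ _ (hx.monotone i.castSucc_lt_succ.le), add_comm]

lemma strictMono_of_mem_cell {N : ℕ} {x ξ : Fin N → ℝ} (h : ∀ i, ξ i ∈ cell x i) :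
    StrictMono ξ := fun i j hij => (h i).1.trans_lt ((h j).2 i hij)

/-- The one-sided exponential `δ⁻¹ exp (-t / δ)` for `t ≥ 0`, and `0` for `t < 0`: the totally
positive function of type one with parameter `δ > 0`. -/
noncomputable def expKer (δ : ℝ) (t : ℝ) : ℝ :=
  (Set.Ici 0).indicator (fun t => δ⁻¹ * Real.exp (-t / δ)) t

lemma expKer_sub (δ x y : ℝ) : expKer δ (x - y) =
    Real.exp (-x / δ) * ((Set.Iic x).indicator (fun s => δ⁻¹ * Real.exp (s / δ)) y) := by
  by_cases h : y ≤ x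
  · simp only [expKer, Set.indicator, Set.mem_Ici, sub_nonneg, h, Set.mem_Iic, if_true]
    rw [show -(x - y) / δ = -x / δ + y / δ by ring, Real.exp_add]; ring
  · simp [expKer, Set.indicator, h]

/-- After extracting row factors and subtracting consecutive rows, the `(i, j)` entry is nonzero
exactly when `y j` lies in the `i`-th cell. As the cells are disjoint and ordered, only the identity
permutation contributes to the determinant. -/
lemma isTP_expKer {δ : ℝ} (hδ : 0 < δ) : IsTP 1 0 (expKer δ) := by
  intro N x y hx hy
  have key : (Matrix.of fun i j => expKer δ (x i - y j)).det =
      (∏ i, Real.exp (-x i / δ)) * ∏ i, (cell x i).indicator (fun s => δ⁻¹ * Real.exp (s / δ)) (y i) := by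
    simp_rw [expKer_sub]
    have h1 := Matrix.det_mul_column (fun i => Real.exp (-x i / δ))
      (Matrix.of fun i j => (Set.Iic (x i)).indicator (fun s => δ⁻¹ * Real.exp (s / δ)) (y j))
    simp only [Matrix.of_apply] at h1
    rw [h1]
    congr 1
    rw [det_cell hx (fun j S => S.indicator (fun s => δ⁻¹ * Real.exp (s / δ)) (y j)),
      Matrix.det_apply, Finset.sum_eq_single 1]
    · simp
    · intro σ _ hσ
      by_contra hne
      have hne' := right_ne_zero_of_smul hne
      rw [Finset.prod_ne_zero_iff] at hne'
      have hmem : ∀ i, y i ∈ cell x (σ i) := fun i =>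
        Set.mem_of_indicator_ne_zero (f := fun s => δ⁻¹ * Real.exp (s / δ))
          (hne' i (Finset.mem_univ _))
      apply hσ
      have hmono : StrictMono σ := by
        intro i j hij
        by_contra hcon
        have hlt : σ j < σ i := lt_of_le_of_ne (not_lt.1 hcon) (fun h => hij.ne' (σ.injective h))
        have := (hmem i).2 _ hlt
        have := (hmem j).1
        have := hy hij
        linarith
      have : (σ : Fin N → Fin N) = id :=
        (StrictMono.range_inj hmono strictMono_id).1 (by simp [σ.surjective.range_eq])
      ext i; simp [this]
    · simp
    · intro j a b hab
      rw [← Set.Iic_union_Ioc_eq_Iic hab,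
        Set.indicator_union_of_disjoint (Set.Iic_disjoint_Ioc le_rfl)]
  have hw : ∀ s, 0 < δ⁻¹ * Real.exp (s / δ) := fun s => by positivity
  rw [key]
  refine ⟨mul_nonneg (Finset.prod_nonneg fun i _ => (Real.exp_pos _).le)
    (Finset.prod_nonneg fun i _ => Set.indicator_nonneg (fun s _ => (hw s).le) _), fun h => ?_⟩
  refine mul_pos (Finset.prod_pos fun i _ => (Real.exp_pos _)) (Finset.prod_pos fun i _ => ?_)
  rw [Set.indicator_of_mem]
  · exact hw _
  · exact ⟨(h.1 i i le_rfl).le, fun k hk => h.2 k i hk⟩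

/-- Reflection exchanges the two exponents; the order of the nodes is reversed. -/
lemma IsTP.comp_neg {m n : ℕ} {f : ℝ → ℝ} (h : IsTP m n f) : IsTP n m fun t => f (-t) := by
  intro N x y hx hy
  obtain ⟨h1, h2⟩ := h N (fun i => -x i.rev) (fun i => -y i.rev)
    (fun i j hij => neg_lt_neg (hx (Fin.rev_lt_rev.2 hij)))
    (fun i j hij => neg_lt_neg (hy (Fin.rev_lt_rev.2 hij)))
  have e : (Matrix.of fun i j => f (-(x i - y j))).det =
      (Matrix.of fun i j : Fin N => f (-x i.rev - -y j.rev)).det := by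
    rw [← Matrix.det_submatrix_equiv_self Fin.revPerm]
    congr 1; ext i j; simp [Fin.revPerm]; ring_nf
  rw [e]
  refine ⟨h1, fun hI => h2 ⟨fun i j hij => ?_, fun i j hij => ?_⟩⟩
  · exact neg_lt_neg (hI.2 _ _ (by simp only [Fin.val_rev]; omega))
  · exact neg_lt_neg (hI.1 _ _ (by simp only [Fin.val_rev]; omega))

/-! ### Convolution with a one-sided exponential -/

/-- The convolution of `f` with `expKer δ`. -/
noncomputable def conv (δ : ℝ) (f : ℝ → ℝ) : ℝ → ℝ :=
  convolution f (expKer δ) (ContinuousLinearMap.mul ℝ ℝ) volume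

/-- The row factor `exp (-x / δ)` splits off, and the remaining integrand depends on `x` only
through the domain of integration. -/
lemma conv_apply (δ : ℝ) (f : ℝ → ℝ) (x y : ℝ) : conv δ f (x - y) =
    Real.exp (-x / δ) * ∫ s in Set.Iic x, δ⁻¹ * Real.exp (s / δ) * f (s - y) := by
  rw [conv, convolution_def, ← integral_sub_right_eq_self _ y, ← integral_indicator measurableSet_Iic,
    ← integral_const_mul]
  congr 1; ext s
  simp only [ContinuousLinearMap.mul_apply', sub_sub_sub_cancel_right, expKer_sub, Set.indicator]
  split_ifs <;> ring

lemma integrableOn_weight {δ : ℝ} (hδ : 0 < δ) {f : ℝ → ℝ} (hf : Integrable f) (x y : ℝ) :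
    IntegrableOn (fun s => δ⁻¹ * Real.exp (s / δ) * f (s - y)) (Set.Iic x) := by
  refine Integrable.bdd_mul (c := δ⁻¹ * Real.exp (x / δ)) (hf.comp_sub_right y).integrableOn
    (by fun_prop) ?_
  filter_upwards [ae_restrict_mem measurableSet_Iic] with s hs
  rw [Real.norm_of_nonneg (by positivity)]
  have : s ≤ x := hs
  gcongr

lemma measurableSet_cell {N : ℕ} (x : Fin N → ℝ) (i : Fin N) : MeasurableSet (cell x i) := by
  have : cell x i = Set.Iic (x i) ∩ ⋂ k, ⋂ (_ : k < i), Set.Ioi (x k) := by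
    ext s; simp [cell]
  rw [this]
  exact measurableSet_Iic.inter (.iInter fun k => .iInter fun _ => measurableSet_Ioi)

/-- A determinant of integrals is the integral of the determinant, when each row has its own
variable of integration. -/
lemma det_integral {N : ℕ} (φ : Fin N → Fin N → ℝ → ℝ) (hφ : ∀ i j, Integrable (φ i j)) :
    Integrable (fun ξ : Fin N → ℝ => (Matrix.of fun i j => φ i j (ξ i)).det) ∧
    (Matrix.of fun i j => ∫ s, φ i j s).det =
      ∫ ξ : Fin N → ℝ, (Matrix.of fun i j => φ i j (ξ i)).det := by
  have hi : ∀ σ : Equiv.Perm (Fin N), Integrable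
      (fun ξ : Fin N → ℝ => ((Equiv.Perm.sign σ : ℤ) : ℝ) * ∏ i, φ i (σ i) (ξ i)) := fun σ =>
    (Integrable.fintype_prod (μ := fun _ => volume) (fun i => hφ i (σ i))).const_mul _
  simp_rw [← Matrix.det_transpose (Matrix.of _), Matrix.det_apply', Matrix.transpose_apply,
    Matrix.of_apply]
  refine ⟨integrable_finsetSum _ fun σ _ => hi σ, ?_⟩
  rw [integral_finsetSum _ fun σ _ => hi σ]
  refine Finset.sum_congr rfl fun σ _ => ?_
  rw [integral_const_mul, integral_fintype_prod_volume_eq_prod fun i => φ i (σ i)]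

/-- One more positive parameter raises the first exponent by one. Positivity needs `1 ≤ m + n`,
which gives `y k < y l` whenever `k + n ≤ i` and `i + m ≤ l`. -/
lemma IsTP.conv {m n : ℕ} (hmn : 1 ≤ m + n) {f : ℝ → ℝ} (hf : Integrable f) (h : IsTP m n f)
    {δ : ℝ} (hδ : 0 < δ) : IsTP (m + 1) n (conv δ f) := by
  intro N x y hx hy
  set w : ℝ → ℝ := fun s => δ⁻¹ * Real.exp (s / δ) with hw
  have hwpos : ∀ s, 0 < w s := fun s => by positivity
  set φ : Fin N → Fin N → ℝ → ℝ := fun i j => (cell x i).indicator fun s => w s * f (s - y j) with hφd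
  have hφ : ∀ i j, Integrable (φ i j) := fun i j => by
    rw [integrable_indicator_iff (measurableSet_cell x i)]
    exact (integrableOn_weight hδ hf (x i) (y j)).mono_set fun s hs => hs.1
  obtain ⟨hint, hdet⟩ := det_integral φ hφ
  have key : (Matrix.of fun i j => SchoenbergWhitney.conv δ f (x i - y j)).det =
      (∏ i, Real.exp (-x i / δ)) * ∫ ξ : Fin N → ℝ, (Matrix.of fun i j => φ i j (ξ i)).det := by
    simp_rw [conv_apply]
    have h1 := Matrix.det_mul_column (fun i => Real.exp (-x i / δ))
      (Matrix.of fun i j => ∫ s in Set.Iic (x i), w s * f (s - y j))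
    simp only [Matrix.of_apply] at h1
    rw [h1, ← hdet, det_cell hx (fun j S => ∫ s in S, w s * f (s - y j))]
    · simp_rw [hφd, integral_indicator (measurableSet_cell _ _)]
    · intro j a b hab
      rw [← Set.Iic_union_Ioc_eq_Iic hab]
      refine setIntegral_union (Set.Iic_disjoint_Ioc le_rfl) measurableSet_Ioc
        (integrableOn_weight hδ hf _ _) ((integrableOn_weight hδ hf b _).mono_set fun s hs => hs.2)
  have hfac : ∀ ξ : Fin N → ℝ, (∀ i, ξ i ∈ cell x i) → (Matrix.of fun i j => φ i j (ξ i)).det =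
      (∏ i, w (ξ i)) * (Matrix.of fun i j => f (ξ i - y j)).det := fun ξ hξ => by
    have h1 := Matrix.det_mul_column (fun i => w (ξ i)) (Matrix.of fun i j => f (ξ i - y j))
    rw [← h1]
    congr 1; ext i j
    simp [hφd, Set.indicator_of_mem (hξ i)]
  have hnn : 0 ≤ fun ξ : Fin N → ℝ => (Matrix.of fun i j => φ i j (ξ i)).det := by
    intro ξ
    by_cases hξ : ∀ i, ξ i ∈ cell x i
    · simp only [Pi.zero_apply, hfac ξ hξ]
      exact mul_nonneg (Finset.prod_nonneg fun i _ => (hwpos _).le)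
        (h N ξ y (strictMono_of_mem_cell hξ) hy).1
    · push Not at hξ
      obtain ⟨i, hi⟩ := hξ
      exact (Matrix.det_eq_zero_of_row_eq_zero i fun j => by simp [hφd, hi]).ge
  have hepos : 0 < ∏ i, Real.exp (-x i / δ) := Finset.prod_pos fun i _ => Real.exp_pos _
  rw [key]
  refine ⟨mul_nonneg hepos.le (integral_nonneg hnn), fun hI => mul_pos hepos ?_⟩
  rw [integral_pos_iff_support_of_nonneg hnn hint]
  classical
  -- `ξ i` is chosen strictly above all of `lo i` and strictly below all of `hi i`: then `ξ i` lies
  -- in the `i`-th cell and `ξ`, `y` satisfy the interlacing condition for `f`.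
  let lo : Fin N → Finset ℝ := fun i => (Finset.univ.filter (· < i)).image x ∪
    (Finset.univ.filter fun k : Fin N => (k : ℕ) + n ≤ i).image y
  let hi : Fin N → Finset ℝ := fun i => {x i} ∪
    (Finset.univ.filter fun k : Fin N => (i : ℕ) + m ≤ k).image y
  have hlohi : ∀ i, ∃ s, (∀ a ∈ lo i, a < s) ∧ ∀ b ∈ hi i, s < b := by
    intro i
    refine Order.exists_between_finsets _ _ fun a ha b hb => ?_
    simp only [lo, hi, Finset.mem_union, Finset.mem_image, Finset.mem_filter, Finset.mem_univ,
      true_and, Finset.mem_singleton] at ha hb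
    rcases ha with ⟨k, hk, rfl⟩ | ⟨k, hk, rfl⟩ <;> rcases hb with rfl | ⟨l, hl, rfl⟩
    · exact hx hk
    · exact hI.2 k l (by have : (k : ℕ) < i := hk; omega)
    · exact hI.1 k i hk
    · exact hy (show (k : ℕ) < l by omega)
  let U : Set (Fin N → ℝ) := Set.univ.pi fun i => {s | (∀ a ∈ lo i, a < s) ∧ ∀ b ∈ hi i, s < b}
  have hUo : IsOpen U := by
    refine isOpen_set_pi Set.finite_univ fun i _ => ?_
    have : {s | (∀ a ∈ lo i, a < s) ∧ ∀ b ∈ hi i, s < b} =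
        (⋂ a ∈ lo i, Set.Ioi a) ∩ ⋂ b ∈ hi i, Set.Iio b := by ext s; simp
    rw [this]
    exact (isOpen_biInter_finset fun _ _ => isOpen_Ioi).inter
      (isOpen_biInter_finset fun _ _ => isOpen_Iio)
  have hUn : U.Nonempty := Set.univ_pi_nonempty_iff.2 hlohi
  refine (hUo.measure_pos volume hUn).trans_le (measure_mono fun ξ hξ => ?_)
  have hξ' : ∀ i, (∀ a ∈ lo i, a < ξ i) ∧ ∀ b ∈ hi i, ξ i < b := fun i => hξ i (Set.mem_univ i)
  simp only [lo, hi, Finset.mem_union, Finset.mem_image, Finset.mem_filter, Finset.mem_univ,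
      true_and, Finset.mem_singleton] at hξ'
  have hc : ∀ i, ξ i ∈ cell x i := fun i =>
    ⟨((hξ' i).2 _ (Or.inl rfl)).le, fun k hk => (hξ' i).1 _ (Or.inl ⟨k, hk, rfl⟩)⟩
  rw [Function.mem_support, hfac ξ hc]
  refine (mul_pos (Finset.prod_pos fun i _ => hwpos _) ?_).ne'
  refine (h N ξ y (strictMono_of_mem_cell hc) hy).2
    ⟨fun i j hij => (hξ' j).1 _ (Or.inr ⟨i, hij, rfl⟩), fun i j hij => (hξ' i).2 _ (Or.inr ⟨j, hij, rfl⟩)⟩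


/-! ### Fourier transforms -/

lemma integrable_expKer {δ : ℝ} (hδ : 0 < δ) : Integrable (expKer δ) := by
  unfold expKer
  rw [integrable_indicator_iff measurableSet_Ici, integrableOn_Ici_iff_integrableOn_Ioi]
  refine Integrable.const_mul ?_ _
  have := integrableOn_exp_mul_Ioi (a := -1 / δ) (div_neg_of_neg_of_pos (by norm_num) hδ) 0
  refine this.congr_fun (fun t _ => ?_) measurableSet_Ioi
  simp only; congr 1; ring

lemma fourier_expKer {δ : ℝ} (hδ : 0 < δ) (ξ : ℝ) :
    𝓕 (fun t => (expKer δ t : ℂ)) ξ = (1 + 2 * (Real.pi : ℂ) * I * (δ : ℂ) * (ξ : ℂ))⁻¹ := by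
  have hδ' : (δ : ℂ) ≠ 0 := by exact_mod_cast hδ.ne'
  have hz : (1 + 2 * (Real.pi : ℂ) * I * (δ : ℂ) * (ξ : ℂ)) ≠ 0 := fun h => by
    simpa using congrArg re h
  set a : ℂ := -(1 + 2 * (Real.pi : ℂ) * I * (δ : ℂ) * (ξ : ℂ)) / δ with ha
  have hre : a.re < 0 := by
    rw [ha, Complex.div_ofReal_re]
    simpa using div_neg_of_neg_of_pos (by norm_num : (-1 : ℝ) < 0) hδ
  rw [Real.fourier_real_eq_integral_exp_smul]
  have e : ∀ t : ℝ, cexp (↑(-2 * Real.pi * t * ξ) * I) • (expKer δ t : ℂ) =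
      (Set.Ici 0).indicator (fun t : ℝ => (δ : ℂ)⁻¹ * cexp (a * t)) t := by
    intro t
    by_cases ht : t ∈ Set.Ici (0 : ℝ)
    · simp only [expKer, Set.indicator_of_mem ht, smul_eq_mul]
      push_cast
      rw [mul_left_comm, ← Complex.exp_add]
      congr 2
      rw [ha]; field_simp; ring
    · simp [expKer, Set.indicator_of_notMem ht]
  simp_rw [e]
  rw [integral_indicator measurableSet_Ici, integral_Ici_eq_integral_Ioi, integral_const_mul,
    integral_exp_mul_complex_Ioi hre, ha, ofReal_zero, mul_zero, Complex.exp_zero,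
    neg_div (δ : ℂ), neg_div_neg_eq, one_div_div, ← div_eq_inv_mul, div_right_comm,
    div_self hδ', one_div]

lemma integrable_conv {δ : ℝ} (hδ : 0 < δ) {f : ℝ → ℝ} (hf : Integrable f) :
    Integrable (conv δ f) := hf.integrable_convolution _ (integrable_expKer hδ)

lemma fourier_conv {δ : ℝ} (hδ : 0 < δ) {f : ℝ → ℝ} (hf : Integrable f) (ξ : ℝ) :
    𝓕 (fun t => (conv δ f t : ℂ)) ξ =
      𝓕 (fun t => (f t : ℂ)) ξ * (1 + 2 * (Real.pi : ℂ) * I * (δ : ℂ) * (ξ : ℂ))⁻¹ := by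
  rw [← fourier_expKer hδ]
  refine Eq.trans ?_ (Real.fourier_mul_convolution_eq hf.ofReal (integrable_expKer hδ).ofReal ξ)
  refine congrFun (congrArg 𝓕 (funext fun t => ?_)) ξ
  simp only [conv, convolution_def, ContinuousLinearMap.mul_apply']
  rw [← integral_complex_ofReal]
  push_cast; rfl

lemma continuous_conv {δ : ℝ} (hδ : 0 < δ) {f : ℝ → ℝ} (hf : Integrable f) :
    Continuous (conv δ f) := by
  set φ : ℝ → ℝ := fun s => δ⁻¹ * Real.exp (s / δ) * f s with hφ
  have hi : ∀ b, IntegrableOn φ (Set.Iic b) := fun b => by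
    simpa using integrableOn_weight hδ hf b 0
  have e : conv δ f = fun x => Real.exp (-x / δ) *
      ((∫ s in Set.Iic 0, φ s) + ∫ s in (0 : ℝ)..x, φ s) := by
    ext x
    have := conv_apply δ f x 0
    simp only [sub_zero] at this
    rw [this, ← intervalIntegral.integral_Iic_sub_Iic (hi 0) (hi x)]
    simp [hφ]
  rw [e]
  have : Continuous fun x => ∫ s in (0 : ℝ)..x, φ s := by
    refine intervalIntegral.continuous_primitive (fun a b => ?_) 0
    rw [intervalIntegrable_iff]
    exact (hi (max a b)).mono_set fun s hs => hs.2
  fun_prop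

lemma fourier_comp_neg (f : ℝ → ℝ) (ξ : ℝ) :
    𝓕 (fun t => (f (-t) : ℂ)) ξ = 𝓕 (fun t => (f t : ℂ)) (-ξ) := by
  rw [← Real.fourierInv_eq_fourier_neg, Real.fourierInv_eq_fourier_comp_neg]

/-- Existence of a totally positive function with prescribed nonzero parameters. For a single
parameter it is discontinuous at the origin. -/
lemma exists_tp {ι : Type*} (δ : ι → ℝ) (hδ : ∀ i, δ i ≠ 0) (s : Finset ι) (hs : s.Nonempty) :
    ∃ G : ℝ → ℝ, Integrable G ∧ (2 ≤ s.card → Continuous G) ∧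
      (∀ ξ : ℝ, 𝓕 (fun t => (G t : ℂ)) ξ =
        ∏ k ∈ s, (1 + 2 * (Real.pi : ℂ) * I * (δ k : ℂ) * (ξ : ℂ))⁻¹) ∧
      IsTP (s.filter fun i => 0 < δ i).card (s.filter fun i => δ i < 0).card G := by
  classical
  induction hs using Finset.Nonempty.cons_induction with
  | singleton a =>
    rcases lt_or_gt_of_ne (hδ a) with h | h
    · refine ⟨fun t => expKer (-δ a) (-t), (integrable_expKer (neg_pos.2 h)).comp_neg, by simp, fun ξ => ?_, ?_⟩
      · rw [fourier_comp_neg, fourier_expKer (neg_pos.2 h)]; simp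
      · have := (isTP_expKer (neg_pos.2 h)).comp_neg
        simpa [Finset.filter_singleton, h, h.le, h.not_gt] using this
    · refine ⟨expKer (δ a), (integrable_expKer h), by simp, fun ξ => ?_, ?_⟩
      · rw [fourier_expKer h]; simp
      · have := isTP_expKer h
        simpa [Finset.filter_singleton, h, h.le, h.not_gt] using this
  | cons a s ha hs ih =>
    obtain ⟨G, hG, -, hGF, hTP⟩ := ih
    have hcard : 1 ≤ (s.filter fun i => 0 < δ i).card + (s.filter fun i => δ i < 0).card := by
      obtain ⟨i, hi⟩ := hs
      rcases lt_or_gt_of_ne (hδ i) with h | h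
      · exact le_add_left (Finset.card_pos.2 ⟨i, by simp [hi, h]⟩)
      · exact le_add_right (Finset.card_pos.2 ⟨i, by simp [hi, h]⟩)
    rcases lt_or_gt_of_ne (hδ a) with h | h
    · have h' := neg_pos.2 h
      refine ⟨fun t => conv (-δ a) (fun t => G (-t)) (-t), (integrable_conv h' hG.comp_neg).comp_neg,
        fun _ => (continuous_conv h' hG.comp_neg).comp continuous_neg, fun ξ => ?_, ?_⟩
      · rw [fourier_comp_neg, fourier_conv h' hG.comp_neg, fourier_comp_neg, neg_neg, hGF,
          Finset.prod_cons, mul_comm]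
        simp
      · have := (IsTP.conv (by omega) hG.comp_neg hTP.comp_neg h').comp_neg
        simpa only [Finset.filter_cons, h, h.not_gt, if_true, if_false, Finset.card_cons] using this
    · refine ⟨conv (δ a) G, integrable_conv h hG, fun _ => continuous_conv h hG, fun ξ => ?_, ?_⟩
      · rw [fourier_conv h hG, hGF, Finset.prod_cons, mul_comm]
      · have := IsTP.conv hcard hG hTP h
        simpa only [Finset.filter_cons, h, h.not_gt, if_true, if_false, Finset.card_cons] using this

/-- Fourier inversion applied to `g - h`, whose transform vanishes and so is trivially
integrable. -/
lemma eq_of_fourier_eq {g h : ℝ → ℂ} (hg : Continuous g) (hh : Continuous h) (hgi : Integrable g)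
    (hhi : Integrable h) (H : ∀ ξ, 𝓕 g ξ = 𝓕 h ξ) : g = h := by
  have hF : 𝓕 (g - h) = 0 := by
    ext ξ
    have h1 := (Real.fourierIntegral_convergent_iff ξ).2 hgi
    have h2 := (Real.fourierIntegral_convergent_iff ξ).2 hhi
    have := H ξ
    rw [Real.fourier_eq, Real.fourier_eq] at this
    rw [Real.fourier_eq]
    simp only [Pi.sub_apply, smul_sub]
    rw [integral_sub h1 h2, this]; simp
  have := (hg.sub hh).fourierInv_fourier_eq (hgi.sub hhi) (by
    change Integrable (𝓕 (g - h)); rw [hF]; exact integrable_zero _ _ _)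
  change 𝓕⁻ (𝓕 (g - h)) = g - h at this
  rw [hF] at this
  have h0 : g - h = 0 := by
    rw [← this]; ext t; simp [Real.fourierInv_eq]
  exact sub_eq_zero.1 h0

/-! ### Selection of rows -/

/-- There are enough rows to select as many as there are columns, interlacing with the column
nodes. -/
lemma exists_rows (m n : ℕ) (hmn : 2 ≤ m + n) (α β : ℝ) (hα : 0 < α) (hβ : 0 < β)
    (hαβ : α * β < 1) (x : ℝ) (L : ℕ) (r k₁ k₂ i₁ i₂ : ℤ)
    (hr : r = ⌊1 / (1 - α * β)⌋)
    (hk₁ : k₁ = -(r + 1) * m - L) (hk₂ : k₂ = (r + 1) * n + L)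
    (hi₁ : i₁ = ⌊((k₁ : ℝ) + m - 1) / (α * β) - x / α⌋ + 1)
    (hi₂ : i₂ = ⌈((k₂ : ℝ) - n + 1) / (α * β) - x / α⌉ - 1) :
    ∃ s : Fin (k₂ - k₁ + 1).toNat → Fin (i₂ - i₁ + 1).toNat, StrictMono s ∧
      Interlace m n (fun j => x + α * ((i₁ : ℝ) + s j)) (fun k => ((k₁ : ℝ) + k) / β) := by
  set a := α * β with ha
  have ha0 : 0 < a := mul_pos hα hβ
  have hxa : x / α = β * x / a := by rw [ha]; field_simp
  have hr0 : (0 : ℤ) ≤ r := by rw [hr]; exact Int.floor_nonneg.2 (by apply div_nonneg <;> linarith)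
  -- `⌊1/(1-a)⌋ > a/(1-a)`, in the form needed to count rows
  have hra : a * (r + 1) < r := by
    have h1 : 1 / (1 - a) < r + 1 := by rw [hr]; exact Int.lt_floor_add_one _
    rw [div_lt_iff₀ (by linarith)] at h1
    nlinarith
  have hi₁u : a * i₁ + β * x ≤ k₁ + m - 1 + a := by
    have : ((i₁ : ℝ) - 1) ≤ ((k₁ : ℝ) + m - 1) / a - x / α := by
      rw [hi₁]; push_cast; simpa using Int.floor_le _
    rw [hxa, ← sub_div, le_div_iff₀ ha0] at this
    linarith
  have hi₂l : ∀ i : ℤ, a * i + β * x < k₂ - n + 1 → i ≤ i₂ := by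
    intro i hi
    rw [hi₂, Int.le_sub_one_iff, Int.lt_ceil, hxa, ← sub_div, lt_div_iff₀ ha0]
    linarith
  have hcount : k₂ - k₁ ≤ i₂ - i₁ := by
    have : i₁ + (k₂ - k₁) ≤ i₂ := by
      apply hi₂l
      push_cast
      have h1 : (k₂ : ℝ) - k₁ = (r + 1) * (m + n) + 2 * L := by
        rw [hk₁, hk₂]; push_cast; ring
      have h2 : a * (r + 1) * (m + n : ℝ) ≤ r * (m + n) := by gcongr
      have h3 : a * (2 * L + 1 : ℝ) < 2 * L + 1 := by
        have : (0 : ℝ) < 2 * L + 1 := by positivity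
        nlinarith
      nlinarith
    omega
  -- `T j` is the least integer `i` with `a * i + β * x > k₁ + j - n`.
  let T : ℕ → ℤ := fun j => ⌊((k₁ : ℝ) + j - n - β * x) / a⌋ + 1
  have hTl : ∀ j : ℕ, (k₁ : ℝ) + j - n < a * T j + β * x := by
    intro j
    have := Int.lt_floor_add_one (((k₁ : ℝ) + j - n - β * x) / a)
    rw [div_lt_iff₀ ha0] at this
    simp only [T]; push_cast; linarith
  have hTu : ∀ j : ℕ, a * T j + β * x ≤ (k₁ : ℝ) + j - n + a := by
    intro j
    have := Int.floor_le (((k₁ : ℝ) + j - n - β * x) / a)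
    rw [le_div_iff₀ ha0] at this
    simp only [T]; push_cast; linarith
  have hTm : ∀ i j : ℕ, i < j → T i < T j := by
    intro i j hij
    have h1 := hTu i
    have h2 := hTl j
    have h3 : (i : ℝ) + 1 ≤ j := by exact_mod_cast hij
    have : a * (T i : ℝ) < a * T j := by nlinarith
    exact_mod_cast lt_of_mul_lt_mul_left this ha0.le
  let S : ℕ → ℤ := fun j => max (i₁ + j) (T j)
  have hSm : ∀ i j : ℕ, i < j → S i < S j := fun i j hij =>
    max_lt_max (by simpa using hij) (hTm i j hij)
  have hSi₁ : ∀ j, i₁ ≤ S j := fun j => le_max_of_le_left (by simp)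
  have hSi₂ : ∀ j : ℕ, (j : ℤ) ≤ k₂ - k₁ → S j ≤ i₂ := by
    intro j hj
    refine max_le (by omega) (hi₂l _ ?_)
    have h1 := hTu j
    have h2 : (j : ℝ) ≤ k₂ - k₁ := by exact_mod_cast hj
    linarith
  have hSl : ∀ j : ℕ, (k₁ : ℝ) + j - n < a * S j + β * x := by
    intro j
    have h1 : (T j : ℝ) ≤ S j := by exact_mod_cast le_max_right _ _
    have := hTl j
    nlinarith
  have hSu : ∀ j : ℕ, a * S j + β * x < (k₁ : ℝ) + j + m := by
    intro j
    rcases max_choice (i₁ + (j : ℤ)) (T j) with h | h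
    · simp only [S, h]; push_cast
      have : (0 : ℝ) ≤ j := by positivity
      nlinarith
    · simp only [S, h]
      have := hTu j
      have : (2 : ℝ) ≤ m + n := by exact_mod_cast hmn
      linarith
  have hval : ∀ j, (((S j - i₁).toNat : ℕ) : ℤ) = S j - i₁ := fun j =>
    Int.toNat_of_nonneg (sub_nonneg.2 (hSi₁ j))
  have hval' : ∀ j, (i₁ : ℝ) + ((S j - i₁).toNat : ℕ) = S j := fun j => by
    have : (((S j - i₁).toNat : ℕ) : ℝ) = S j - i₁ := by exact_mod_cast hval j
    rw [this]; ring
  refine ⟨fun j => ⟨(S j - i₁).toNat, ?_⟩, ?_, ?_, ?_⟩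
  · have := hSi₂ j (by omega)
    have := hSi₁ j
    omega
  · intro i j hij
    have := hSm i j hij
    have := hval i
    have := hval j
    show (S i - i₁).toNat < (S j - i₁).toNat
    omega
  · intro i j hij
    simp only [hval']
    rw [div_lt_iff₀ hβ]
    have := hSl j
    have : (i : ℝ) + n ≤ j := by exact_mod_cast hij
    nlinarith
  · intro i j hij
    simp only [hval']
    rw [lt_div_iff₀ hβ]
    have := hSu i
    have : (i : ℝ) + m ≤ j := by exact_mod_cast hij
    nlinarith

end SchoenbergWhitney

open SchoenbergWhitney in
theorem stmt16 (m n : ℕ) (hmn : 2 ≤ m + n) (δ : Fin (m + n) → ℝ)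
    (hδ0 : ∀ i, δ i ≠ 0)
    (hpos : (Finset.univ.filter fun i => 0 < δ i).card = m)
    (hneg : (Finset.univ.filter fun i => δ i < 0).card = n)
    (g : ℝ → ℂ) (hgcont : Continuous g) (hg : Integrable g)
    (hFT : ∀ ξ : ℝ, 𝓕 g ξ =
      ∏ k : Fin (m + n), (1 + 2 * (Real.pi : ℂ) * Complex.I * (δ k : ℂ) * (ξ : ℂ))⁻¹)
    (α β : ℝ) (hα : 0 < α) (hβ : 0 < β) (hαβ : α * β < 1)
    (x : ℝ) (hx : x ∈ Set.Ico 0 α) (L : ℕ)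
    (r k₁ k₂ i₁ i₂ : ℤ)
    (hr : r = ⌊1 / (1 - α * β)⌋)
    (hk₁ : k₁ = -(r + 1) * m - L) (hk₂ : k₂ = (r + 1) * n + L)
    (hi₁ : i₁ = ⌊((k₁ : ℝ) + m - 1) / (α * β) - x / α⌋ + 1)
    (hi₂ : i₂ = ⌈((k₂ : ℝ) - n + 1) / (α * β) - x / α⌉ - 1)
    (P : Matrix (Fin (i₂ - i₁ + 1).toNat) (Fin (k₂ - k₁ + 1).toNat) ℂ)
    (hP : ∀ i k, P i k = g (x + α * ((i₁ : ℝ) + i) - ((k₁ : ℝ) + k) / β)) :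
    P.rank = (k₂ - k₁ + 1).toNat := by
  obtain ⟨G, hGi, hGc, hGF, hTP⟩ := exists_tp δ hδ0 Finset.univ
    (Finset.card_pos.1 (by simp; omega))
  rw [hpos, hneg] at hTP
  have hgG : g = fun t => (G t : ℂ) :=
    eq_of_fourier_eq hgcont (continuous_ofReal.comp (hGc (by simpa using hmn))) hg hGi.ofReal
      fun ξ => by rw [hFT, hGF]
  obtain ⟨s, hs, hI⟩ := exists_rows m n hmn α β hα hβ hαβ x L r k₁ k₂ i₁ i₂ hr hk₁ hk₂ hi₁ hi₂
  have hdet := (hTP _ (fun j => x + α * ((i₁ : ℝ) + s j)) (fun k => ((k₁ : ℝ) + k) / β)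
    (fun i j hij => by
      have : ((s i : ℕ) : ℝ) < (s j : ℕ) := by exact_mod_cast hs hij
      simp only; gcongr)
    (fun i j hij => by
      have : ((i : ℕ) : ℝ) < (j : ℕ) := by exact_mod_cast hij
      simp only; gcongr)).2 hI
  have hsub : IsUnit (P.submatrix s id) := by
    rw [Matrix.isUnit_iff_isUnit_det, isUnit_iff_ne_zero]
    have e : P.submatrix s id = (Matrix.of fun i j : Fin (k₂ - k₁ + 1).toNat =>
        G (x + α * ((i₁ : ℝ) + s i) - ((k₁ : ℝ) + j) / β)).map Complex.ofRealHom := by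
      ext i j; simp [hP, hgG]
    rw [e, ← RingHom.mapMatrix_apply, ← RingHom.map_det]
    simpa using hdet.ne'
  refine le_antisymm (P.rank_le_width) ?_
  calc (k₂ - k₁ + 1).toNat = (P.submatrix s id).rank := by
        rw [Matrix.rank_of_isUnit _ hsub, Fintype.card_fin]
    _ ≤ P.rank := Matrix.rank_submatrix_le _ _ _
end

section
/- Let g ∈ L¹(ℝ) be a totally positive function of finite type m + n ≥ 2, identified with its continuous representative, whose parameters consist of m positive numbers and n negative numbers (m, n ∈ ℕ₀). Let α, β > 0 with αβ < 1, let x ∈ [0, α), L ∈ ℕ₀, and set r = ⌊1/(1 − αβ)⌋, k₁ = −(r+1)m − L, k₂ = (r+1)n + L, i₁ = ⌊(k₁ + m − 1)/(αβ) − x/α⌋ + 1, i₂ = ⌈(k₂ − n + 1)/(αβ) − x/α⌉ − 1. For k ∈ ℤ let w_k = (g(x + αi − k/β))_{i₁ ≤ i ≤ i₂} ∈ ℂ^{i₂−i₁+1}. Then for every integer k < k₁, the vector w_k lies in the linear span of the vectors w_{k₁}, …, w_{k₁+m−1}, and for every integer k > k₂, the vector w_k lies in the linear span of the vectors w_{k₂−n+1},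 …, w_{k₂}. -/
/-!
On `(0, ∞)` the function `g` is an exponential polynomial built from the `m` positive parameters,
so its translates by multiples of `h = 1/β` satisfy a linear recurrence of order `m` there. The
recurrence is obtained on the Fourier side. Let `P = ∏_{δ_k > 0} (X - e^{-h/δ_k})` and let
`G(y) = ∑ P_j g(y + j h)`, so that `𝓕 G ξ = P(e^{2πihξ}) 𝓕 g ξ`. This is a product of factors
`(e^{2πihξ} - e^{-h/δ}) / (1 + 2πiδξ)` with `δ > 0` and `1 / (1 + 2πiδξ)` with `δ < 0`, each of
which is the Fourier transform of an explicit integrable function vanishing on `(0, ∞)`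
(`exists_factor_pos`, `exists_factor_neg`). Their convolution also vanishes on `(0, ∞)`
(`exists_prod`), and Fourier inversion at positive points gives `G = 0` there (`recurrence`).

The choice of `i₁` makes every sampling point `x + α i` larger than `(k₁ + m - 1)/β`, so for `k < k₁`
the recurrence expresses `w_k` through `w_{k+1}, …, w_{k+m}`, and descending induction on `k`
(`mem_span_of_recurrence`) gives the first claim. The second claim is the first one for the
reflected function `y ↦ g (-y)`, whose parameters are `-δ_k`; here `i₂` plays the role of `i₁`.
-/

open MeasureTheory Complex FourierTransform

lemma fourier_shift (g : ℝ → ℂ) (a ξ : ℝ) :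
    𝓕 (fun y => g (y + a)) ξ = cexp (2 * Real.pi * I * a * ξ) * 𝓕 g ξ := by
  simp only [Real.fourier_real_eq_integral_exp_smul, smul_eq_mul]
  rw [← integral_const_mul,
    ← integral_add_right_eq_self (fun v : ℝ => cexp (2 * Real.pi * I * a * ξ) *
      (cexp ((-2 * Real.pi * v * ξ : ℝ) * I) * g v)) a]
  congr 1 with y
  rw [← mul_assoc, ← Complex.exp_add]
  congr 2
  push_cast
  ring

lemma fourier_sum_shift (g : ℝ → ℂ) (hg : Integrable g) (h : ℝ) (P : Polynomial ℂ) (ξ : ℝ) :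
    𝓕 (fun y => ∑ j ∈ Finset.range (P.natDegree + 1), P.coeff j * g (y + j * h)) ξ =
      P.eval (cexp (2 * Real.pi * I * h * ξ)) * 𝓕 g ξ := by
  have key : 𝓕 (fun y => ∑ j ∈ Finset.range (P.natDegree + 1), P.coeff j * g (y + j * h)) ξ =
      ∑ j ∈ Finset.range (P.natDegree + 1), P.coeff j * 𝓕 (fun y => g (y + j * h)) ξ := by
    simp only [Real.fourier_real_eq_integral_exp_smul, smul_eq_mul, Finset.mul_sum]
    rw [integral_finsetSum]
    · refine Finset.sum_congr rfl fun j _ => ?_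
      rw [← integral_const_mul]
      congr 1 with y
      ring
    · intro j _
      have := (Real.fourierIntegral_convergent_iff ξ).2
        ((hg.comp_add_right (j * h)).const_mul (P.coeff j))
      refine this.congr (Filter.Eventually.of_forall fun y => ?_)
      simp only [Circle.smul_def, Real.fourierChar_apply, smul_eq_mul]
      congr 2
      simp
      ring
  rw [key, Polynomial.eval_eq_sum_range, Finset.sum_mul]
  refine Finset.sum_congr rfl fun j _ => ?_
  rw [fourier_shift, ← Complex.exp_nat_mul, ← mul_assoc]
  congr 3
  push_cast
  ring

/-- For `δ < 0`, the function `|δ|⁻¹ e^{-x/δ}` on `(-∞, 0]` has Fourier transform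
`1 / (1 + 2πiδξ)`. -/
lemma exists_factor_neg {δ : ℝ} (hδ : δ < 0) :
    ∃ f : ℝ → ℂ, Integrable f ∧ (∀ x, 0 < x → f x = 0) ∧
      ∀ ξ : ℝ, 𝓕 f ξ = (1 + 2 * (Real.pi : ℂ) * I * (δ : ℂ) * (ξ : ℂ))⁻¹ := by
  have hδ' : (δ : ℂ) ≠ 0 := by exact_mod_cast hδ.ne
  refine ⟨(Set.Iic 0).indicator fun x : ℝ => (-δ : ℂ)⁻¹ * cexp ((-(δ : ℂ)⁻¹) * x), ?_, ?_, ?_⟩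
  · rw [integrable_indicator_iff measurableSet_Iic]
    refine (integrableOn_exp_mul_complex_Iic ?_ 0).const_mul _
    rw [← ofReal_inv, ← ofReal_neg, ofReal_re]
    simpa using hδ
  · intro x hx
    simp [hx]
  · intro ξ
    set c : ℂ := -(δ : ℂ)⁻¹ - 2 * Real.pi * I * ξ with hc
    have hcre : 0 < c.re := by
      have : c = ((-δ⁻¹ : ℝ) : ℂ) + ((-(2 * Real.pi * ξ) : ℝ) : ℂ) * I := by
        rw [hc]; push_cast; ring
      rw [this, add_re, re_ofReal_mul, ofReal_re, I_re, mul_zero, add_zero]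
      simpa using hδ
    have h1 : ∀ v : ℝ, cexp ((-2 * Real.pi * v * ξ : ℝ) * I) •
        (Set.Iic 0).indicator (fun x : ℝ => (-δ : ℂ)⁻¹ * cexp ((-(δ : ℂ)⁻¹) * x)) v =
        (Set.Iic 0).indicator (fun x : ℝ => (-δ : ℂ)⁻¹ * cexp (c * x)) v := by
      intro v
      by_cases hv : v ∈ Set.Iic (0 : ℝ)
      · simp only [Set.indicator_of_mem hv, smul_eq_mul]
        rw [mul_left_comm, ← Complex.exp_add]
        congr 2
        rw [hc]; push_cast; ring
      · simp [Set.indicator_of_notMem hv]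
    rw [Real.fourier_real_eq_integral_exp_smul]
    simp_rw [h1]
    rw [integral_indicator measurableSet_Iic, integral_const_mul, integral_exp_mul_complex_Iic hcre]
    simp only [ofReal_zero, mul_zero, Complex.exp_zero, one_div]
    rw [← mul_inv]
    congr 1
    rw [hc]
    field_simp
    ring

/-- For `δ > 0`, let `φ(x) = δ⁻¹ e^{-x/δ}` on `(0, ∞)`, with transform `1 / (1 + 2πiδξ)`. In
`φ(x + h) - e^{-h/δ} φ(x)` the tails cancel, leaving `δ⁻¹ e^{-(x+h)/δ}` on `(-h, 0]`. -/
lemma exists_factor_pos {δ h : ℝ} (hδ : 0 < δ) (hh : 0 < h) :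
    ∃ f : ℝ → ℂ, Integrable f ∧ (∀ x, 0 < x → f x = 0) ∧
      ∀ ξ : ℝ, 𝓕 f ξ = (cexp (2 * Real.pi * I * h * ξ) - cexp (-(h : ℂ) / δ)) *
        (1 + 2 * (Real.pi : ℂ) * I * (δ : ℂ) * (ξ : ℂ))⁻¹ := by
  have hδ' : (δ : ℂ) ≠ 0 := by exact_mod_cast hδ.ne'
  refine ⟨(Set.Ioc (-h) 0).indicator fun x : ℝ =>
    ((δ : ℂ)⁻¹ * cexp (-(h : ℂ) / δ)) * cexp ((-(δ : ℂ)⁻¹) * x), ?_, ?_, ?_⟩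
  · rw [integrable_indicator_iff measurableSet_Ioc]
    exact (Continuous.integrableOn_Ioc (by fun_prop))
  · intro x hx
    simp [hx]
  · intro ξ
    set c : ℂ := -(δ : ℂ)⁻¹ - 2 * Real.pi * I * ξ with hc
    have hc0 : c ≠ 0 := by
      have : c = ((-δ⁻¹ : ℝ) : ℂ) + ((-(2 * Real.pi * ξ) : ℝ) : ℂ) * I := by
        rw [hc]; push_cast; ring
      intro h0
      have h2 := congrArg Complex.re h0
      rw [this, add_re, re_ofReal_mul, ofReal_re, I_re, mul_zero, add_zero] at h2
      simp [hδ.ne'] at h2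
    have h1 : ∀ v : ℝ, cexp ((-2 * Real.pi * v * ξ : ℝ) * I) •
        (Set.Ioc (-h) 0).indicator (fun x : ℝ =>
          ((δ : ℂ)⁻¹ * cexp (-(h : ℂ) / δ)) * cexp ((-(δ : ℂ)⁻¹) * x)) v =
        (Set.Ioc (-h) 0).indicator
          (fun x : ℝ => ((δ : ℂ)⁻¹ * cexp (-(h : ℂ) / δ)) * cexp (c * x)) v := by
      intro v
      by_cases hv : v ∈ Set.Ioc (-h) (0 : ℝ)
      · simp only [Set.indicator_of_mem hv, smul_eq_mul]
        rw [mul_left_comm, ← Complex.exp_add]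
        congr 2
        rw [hc]; push_cast; ring
      · simp [Set.indicator_of_notMem hv]
    rw [Real.fourier_real_eq_integral_exp_smul]
    simp_rw [h1]
    rw [integral_indicator measurableSet_Ioc, integral_const_mul,
      ← intervalIntegral.integral_of_le (by linarith), integral_exp_mul_complex hc0]
    have h3 : (1 + 2 * (Real.pi : ℂ) * I * (δ : ℂ) * (ξ : ℂ)) = -(δ * c) := by
      rw [hc]; field_simp; ring
    have h4 : cexp (2 * Real.pi * I * h * ξ) = cexp (-(h : ℂ) / δ) * cexp (c * ((-h : ℝ) : ℂ)) := by
      rw [← Complex.exp_add, hc]; congr 1; push_cast; field_simp; ring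
    rw [h3, h4]
    simp only [ofReal_zero, mul_zero, Complex.exp_zero]
    field_simp
    ring

open Convolution in
/-- The convolution of integrable functions vanishing on `(0, ∞)` is again of this kind, so
finite nonempty products of their Fourier transforms are transforms of such functions. -/
lemma exists_prod {ι : Type*} (s : Finset ι) (hs : s.Nonempty) (F : ι → ℝ → ℂ)
    (hF : ∀ i ∈ s, ∃ f : ℝ → ℂ, Integrable f ∧ (∀ x, 0 < x → f x = 0) ∧ ∀ ξ, 𝓕 f ξ = F i ξ) :
    ∃ f : ℝ → ℂ, Integrable f ∧ (∀ x, 0 < x → f x = 0) ∧ ∀ ξ, 𝓕 f ξ = ∏ i ∈ s, F i ξ := by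
  induction hs using Finset.Nonempty.cons_induction with
  | singleton a => simpa using hF a (by simp)
  | cons a s ha hs ih =>
    obtain ⟨f₁, hi₁, hz₁, hf₁⟩ := hF a (by simp)
    obtain ⟨f₂, hi₂, hz₂, hf₂⟩ := ih fun i hi => hF i (by simp [hi])
    refine ⟨f₁ ⋆[ContinuousLinearMap.mul ℂ ℂ] f₂, hi₁.integrable_convolution _ hi₂, ?_, ?_⟩
    · intro x hx
      rw [convolution_def]
      refine integral_eq_zero_of_ae (Filter.Eventually.of_forall fun t => ?_)
      rcases lt_or_ge 0 t with ht | ht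
      · simp [hz₁ t ht]
      · simp [hz₂ (x - t) (by linarith)]
    · intro ξ
      rw [Real.fourier_mul_convolution_eq hi₁ hi₂, hf₁, hf₂, Finset.prod_cons]

/-- On `(0, ∞)` the translates of `g` by multiples of `h` satisfy a linear recurrence whose order is
the number of positive parameters. -/
lemma recurrence {ι : Type*} [Fintype ι] [Nonempty ι] (δ : ι → ℝ) (hδ0 : ∀ i, δ i ≠ 0)
    (g : ℝ → ℂ) (hgcont : Continuous g) (hg : Integrable g)
    (hFT : ∀ ξ : ℝ, 𝓕 g ξ = ∏ k, (1 + 2 * (Real.pi : ℂ) * I * (δ k : ℂ) * (ξ : ℂ))⁻¹)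
    (m : ℕ) (hm : (Finset.univ.filter fun i => 0 < δ i).card = m) (h : ℝ) (hh : 0 < h) :
    ∃ c : ℕ → ℂ, ∀ y : ℝ, 0 < y →
      g (y + m * h) = ∑ j ∈ Finset.range m, c j * g (y + j * h) := by
  classical
  set P : Polynomial ℂ := ∏ i ∈ Finset.univ.filter (fun i => 0 < δ i),
    (Polynomial.X - Polynomial.C (cexp (-(h : ℂ) / δ i))) with hP
  have hdeg : P.natDegree = m := by
    rw [hP, Polynomial.natDegree_finsetProd_X_sub_C_eq_card, hm]
  have hmonic : P.Monic := Polynomial.monic_prod_X_sub_C _ _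
  set G : ℝ → ℂ := fun y => ∑ j ∈ Finset.range (P.natDegree + 1), P.coeff j * g (y + j * h) with hG
  have hGcont : Continuous G := by fun_prop
  have hGint : Integrable G := integrable_finsetSum _ fun j _ =>
    (hg.comp_add_right (j * h)).const_mul (P.coeff j)
  obtain ⟨f, hfi, hfz, hfF⟩ := exists_prod Finset.univ Finset.univ_nonempty
    (fun i ξ => if 0 < δ i then (cexp (2 * Real.pi * I * h * ξ) - cexp (-(h : ℂ) / δ i)) *
        (1 + 2 * (Real.pi : ℂ) * I * (δ i : ℂ) * (ξ : ℂ))⁻¹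
      else (1 + 2 * (Real.pi : ℂ) * I * (δ i : ℂ) * (ξ : ℂ))⁻¹) (by
    intro i _
    by_cases hi : 0 < δ i
    · simpa [hi] using exists_factor_pos hi hh
    · simpa [hi] using exists_factor_neg (lt_of_le_of_ne (not_lt.1 hi) (hδ0 i)))
  have hFG : ∀ ξ, 𝓕 G ξ = 𝓕 f ξ := by
    intro ξ
    rw [hfF, hG, fourier_sum_shift g hg, hFT, hP, Polynomial.eval_prod, Finset.prod_filter,
      ← Finset.prod_mul_distrib]
    refine Finset.prod_congr rfl fun i _ => ?_
    split_ifs <;> simp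
  have hzero : 𝓕 (G - f) = 0 := by
    ext ξ
    have := hFG ξ
    simp only [Real.fourier_real_eq] at this ⊢
    simp only [Pi.sub_apply, smul_sub, Pi.zero_apply]
    rw [integral_sub, this, sub_self]
    · simpa [mul_comm] using (Real.fourierIntegral_convergent_iff ξ).2 hGint
    · simpa [mul_comm] using (Real.fourierIntegral_convergent_iff ξ).2 hfi
  have hGz : ∀ y, 0 < y → G y = 0 := by
    intro y hy
    -- `f` vanishes near `y`, so inversion applies to `G - f` at `y` without regularity of `f`.
    have hfc : ContinuousAt f y := by
      refine continuousAt_const (y := (0 : ℂ)) |>.congr ?_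
      filter_upwards [lt_mem_nhds hy] with z hz using (hfz z hz).symm
    have := (hGint.sub hfi).fourierInv_fourier_eq (by rw [hzero]; exact integrable_zero _ _ _)
      (hGcont.continuousAt.sub hfc)
    rw [hzero, Real.fourierInv_eq] at this
    simpa [hfz y hy, eq_comm] using this
  refine ⟨fun j => -P.coeff j, fun y hy => ?_⟩
  have := hGz y hy
  rw [hG] at this
  simp only [hdeg] at this
  have hlead : P.coeff m = 1 := hdeg ▸ hmonic
  rw [Finset.sum_range_succ, hlead, one_mul] at this
  simp only [neg_mul, Finset.sum_neg_distrib]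
  exact eq_neg_of_add_eq_zero_right this

/-- A sequence over `ℤ` whose terms below `K` are combinations of the `m` following terms lies,
below `K`, in the span of the `m` terms starting at `K`. -/
lemma mem_span_of_recurrence {V : Type*} [AddCommGroup V] [Module ℂ V] (w : ℤ → V) (m : ℕ)
    (K : ℤ) (c : ℕ → ℂ)
    (hrec : ∀ k < K, w k = ∑ j ∈ Finset.range m, c j • w (k + m - j)) (k : ℤ) (hk : k < K) :
    w k ∈ Submodule.span ℂ (Set.range fun t : Fin m => w (K + t)) := by
  suffices H : ∀ d : ℕ, ∀ k : ℤ, k < K + m → K + m - k ≤ d →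
      w k ∈ Submodule.span ℂ (Set.range fun t : Fin m => w (K + t)) from
    H (K + m - k).toNat k (by omega) (by omega)
  intro d
  induction d with
  | zero => intro k h1 h2; omega
  | succ d ih =>
    intro k h1 h2
    by_cases hk : k < K
    · rw [hrec k hk]
      refine Submodule.sum_mem _ fun j hj => Submodule.smul_mem _ _ (ih _ ?_ ?_)
      · omega
      · have := Finset.mem_range.1 hj
        omega
    · refine Submodule.subset_span ⟨⟨(k - K).toNat, by omega⟩, ?_⟩
      simp only
      congr 1
      omega

theorem stmt17 (m n : ℕ) (hmn : 2 ≤ m + n) (δ : Fin (m + n) → ℝ)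
    (hδ0 : ∀ i, δ i ≠ 0)
    (hpos : (Finset.univ.filter fun i => 0 < δ i).card = m)
    (hneg : (Finset.univ.filter fun i => δ i < 0).card = n)
    (g : ℝ → ℂ) (hgcont : Continuous g) (hg : Integrable g)
    (hFT : ∀ ξ : ℝ, 𝓕 g ξ =
      ∏ k : Fin (m + n), (1 + 2 * (Real.pi : ℂ) * Complex.I * (δ k : ℂ) * (ξ : ℂ))⁻¹)
    (α β : ℝ) (hα : 0 < α) (hβ : 0 < β) (hαβ : α * β < 1)
    (x : ℝ) (hx : x ∈ Set.Ico 0 α) (L : ℕ)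
    (r k₁ k₂ i₁ i₂ : ℤ)
    (hr : r = ⌊1 / (1 - α * β)⌋)
    (hk₁ : k₁ = -(r + 1) * m - L) (hk₂ : k₂ = (r + 1) * n + L)
    (hi₁ : i₁ = ⌊((k₁ : ℝ) + m - 1) / (α * β) - x / α⌋ + 1)
    (hi₂ : i₂ = ⌈((k₂ : ℝ) - n + 1) / (α * β) - x / α⌉ - 1)
    (w : ℤ → Fin (i₂ - i₁ + 1).toNat → ℂ)
    (hw : ∀ (k : ℤ) (i : Fin (i₂ - i₁ + 1).toNat),
      w k i = g (x + α * ((i₁ : ℝ) + i) - (k : ℝ) / β)) :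
    (∀ k : ℤ, k < k₁ →
      w k ∈ Submodule.span ℂ (Set.range fun t : Fin m => w (k₁ + t))) ∧
    (∀ k : ℤ, k₂ < k →
      w k ∈ Submodule.span ℂ (Set.range fun t : Fin n => w (k₂ - n + 1 + t))) := by
  have hne : Nonempty (Fin (m + n)) := ⟨⟨0, by omega⟩⟩
  have hh : 0 < β⁻¹ := inv_pos.2 hβ
  have hlow : ∀ i : Fin (i₂ - i₁ + 1).toNat,
      ((k₁ : ℝ) + m - 1) * β⁻¹ < x + α * ((i₁ : ℝ) + i) := by
    intro i
    have h1 : ((k₁ : ℝ) + m - 1) / (α * β) - x / α < i₁ := by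
      rw [hi₁]; push_cast; exact Int.lt_floor_add_one _
    have h2 : ((k₁ : ℝ) + m - 1) / (α * β) - x / α < i₁ + i :=
      h1.trans_le (by linarith [Nat.cast_nonneg (α := ℝ) (i : ℕ)])
    have h3 := mul_lt_mul_of_pos_left h2 hα
    have h4 : α * (((k₁ : ℝ) + m - 1) / (α * β) - x / α) = ((k₁ : ℝ) + m - 1) * β⁻¹ - x := by
      field_simp
    linarith
  have hupp : ∀ i : Fin (i₂ - i₁ + 1).toNat,
      x + α * ((i₁ : ℝ) + i) < ((k₂ : ℝ) - n + 1) * β⁻¹ := by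
    intro i
    have h1 : (i₂ : ℝ) < ((k₂ : ℝ) - n + 1) / (α * β) - x / α := by
      rw [hi₂]; push_cast; linarith [Int.ceil_lt_add_one (((k₂ : ℝ) - n + 1) / (α * β) - x / α)]
    have h2 : (i₁ : ℝ) + i ≤ i₂ := by
      have := i.2
      have : i₁ + (i : ℕ) ≤ i₂ := by omega
      exact_mod_cast this
    have h3 := mul_lt_mul_of_pos_left (h2.trans_lt h1) hα
    have h4 : α * (((k₂ : ℝ) - n + 1) / (α * β) - x / α) = ((k₂ : ℝ) - n + 1) * β⁻¹ - x := by
      field_simp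
    linarith
  constructor
  · obtain ⟨c, hc⟩ := recurrence δ hδ0 g hgcont hg hFT m hpos β⁻¹ hh
    refine mem_span_of_recurrence w m k₁ c fun k hk => ?_
    ext i
    have hk' : (k : ℝ) + 1 ≤ k₁ := by exact_mod_cast hk
    have h1 := hlow i
    have h2 : ((k : ℝ) + m) * β⁻¹ ≤ ((k₁ : ℝ) + m - 1) * β⁻¹ :=
      mul_le_mul_of_nonneg_right (by linarith) hh.le
    have h3 := hc (x + α * ((i₁ : ℝ) + i) - ((k : ℝ) + m) * β⁻¹) (by linarith)
    simp only [Finset.sum_apply, Pi.smul_apply, smul_eq_mul, hw]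
    convert h3 using 2
    · ring
    · congr 2
      push_cast
      ring
  · have hFT' : ∀ ξ : ℝ, 𝓕 (fun y => g (-y)) ξ =
        ∏ k : Fin (m + n), (1 + 2 * (Real.pi : ℂ) * I * ((-δ k : ℝ) : ℂ) * (ξ : ℂ))⁻¹ := by
      intro ξ
      have := Real.fourier_comp_linearIsometry (LinearIsometryEquiv.neg ℝ (E := ℝ)) g ξ
      have h2 : (g ∘ (LinearIsometryEquiv.neg ℝ (E := ℝ))) = fun y => g (-y) := rfl
      rw [h2] at this
      rw [this]
      simp [hFT]
    obtain ⟨c, hc⟩ := recurrence (fun k => -δ k) (fun i => neg_ne_zero.2 (hδ0 i))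
      (fun y => g (-y)) (by fun_prop) hg.comp_neg hFT' n (by simpa using hneg) β⁻¹ hh
    intro k hk
    have key := mem_span_of_recurrence (fun k => w (-k)) n (-k₂) c (fun k hk => ?_) (-k) (by omega)
    · simp only [neg_neg] at key
      refine Submodule.span_mono ?_ key
      rintro _ ⟨t, rfl⟩
      refine ⟨t.rev, ?_⟩
      simp only [Fin.val_rev]
      congr 1
      have := t.2
      omega
    · ext i
      have hk' : (k : ℝ) + 1 ≤ -k₂ := by exact_mod_cast hk
      have h1 := hupp i
      have h2 : ((k₂ : ℝ) - n + 1) * β⁻¹ ≤ (-(k : ℝ) - n) * β⁻¹ :=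
        mul_le_mul_of_nonneg_right (by linarith) hh.le
      have h3 := hc ((-(k : ℝ) - n) * β⁻¹ - (x + α * ((i₁ : ℝ) + i))) (by linarith)
      simp only [Finset.sum_apply, Pi.smul_apply, smul_eq_mul, hw]
      convert h3 using 2
      · push_cast
        ring
      · congr 2
        push_cast
        ring
end
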